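/- arXiv:0904.1906 — 2 statements merged into one kernel-verified Lean document; each statement's English description precedes it below -/
import Mathlib

section
/- Let α₁, α₂ be real numbers such that 1, α₁, α₂ are linearly independent over ℤ. Then there exists a sequence of integer two-dimensional vectors (x₁(i), x₂(i)), i = 1, 2, ..., such that x₁(i) > 0 and x₂(i) > 0 for every i, and ‖α₁x₁(i) + α₂x₂(i)‖ · (max{x₁(i), x₂(i)})^τ → 0 as i → ∞. -/
/-- distance from a real number to the nearest integer -/
noncomputable def nint (ξ : ℝ) : ℝ := |ξ - round ξ|

/-- `1, α₁, α₂` are linearly independent over `ℤ` -/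
def ZLinIndep (α₁ α₂ : ℝ) : Prop :=
  ∀ a b c : ℤ, (a : ℝ) + b * α₁ + c * α₂ = 0 → a = 0 ∧ b = 0 ∧ c = 0

/-- the golden ratio τ = (1+√5)/2 -/
noncomputable def tau : ℝ := (1 + Real.sqrt 5) / 2

/-- the linear form -/
def Lf (a b : ℝ) (u : ℤ × ℤ × ℤ) : ℝ := u.1 + a * u.2.1 + b * u.2.2

/-- the height of an integer vector -/
def hgt (u : ℤ × ℤ × ℤ) : ℤ := max |u.2.1| |u.2.2|

/-- the planar determinant -/
def wdg (u v : ℤ × ℤ × ℤ) : ℤ := u.2.1 * v.2.2 - u.2.2 * v.2.1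

/-- the negation of the claim at level `ε` -/
def Bad (a b ε : ℝ) : Prop := ∀ x : ℤ × ℤ × ℤ, 0 < x.2.1 → 0 < x.2.2 →
  ε ≤ |Lf a b x| * (hgt x : ℝ) ^ tau

lemma tau_gt : 1 < tau := by
  unfold tau
  have : (1:ℝ) < √5 := by rw [Real.lt_sqrt] <;> norm_num
  linarith

lemma tau_lt : tau < 2 := by
  unfold tau
  have : √5 < (3:ℝ) := by rw [Real.sqrt_lt'] <;> norm_num
  linarith

lemma tau_mul : (tau - 1) * tau = 1 := by
  unfold tau
  have := Real.sq_sqrt (show (0:ℝ) ≤ 5 by norm_num)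
  nlinarith

lemma hgt_nonneg (u : ℤ × ℤ × ℤ) : 0 ≤ hgt u := le_max_of_le_left (abs_nonneg _)

lemma Lf_add (a b : ℝ) (u v : ℤ × ℤ × ℤ) : Lf a b (u + v) = Lf a b u + Lf a b v := by
  simp [Lf]; ring

lemma Lf_smul (a b : ℝ) (n : ℤ) (u : ℤ × ℤ × ℤ) : Lf a b (n • u) = n * Lf a b u := by
  simp [Lf]; ring

lemma hgt_smul (n : ℤ) (u : ℤ × ℤ × ℤ) : hgt (n • u) = |n| * hgt u := by
  simp [hgt, abs_mul, mul_max_of_nonneg]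

lemma wdg_smul (n : ℤ) (u v : ℤ × ℤ × ℤ) : wdg u (n • v) = n * wdg u v := by
  simp [wdg]; ring

lemma pos_core (a b w1 w2 : ℤ) (ha : 0 < a) (hb : 0 ≤ b) (hba : b ≤ a)
    (hf : 2 * a ^ 2 ≤ a * w2 + b * w1) :
    ∃ t : ℤ, 0 < w1 + t * a ∧ 0 < w2 - t * b ∧ a * (w1 + t * a) ≤ a * w2 + b * w1 ∧
      a * (w2 - t * b) ≤ a * w2 + b * w1 ∧ a * |t| ≤ |w1| + a := by
  have h1 := Int.emod_nonneg (w1 - 1) ha.ne'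
  have h2 := Int.emod_lt_of_pos (w1 - 1) ha
  have h3 := Int.emod_add_mul_ediv (w1 - 1) a
  set r := (w1 - 1) % a
  set k := (w1 - 1) / a
  have e1 : w1 + (-k) * a = r + 1 := by linarith
  have e2 : a * (w2 - (-k) * b) = (a * w2 + b * w1) - b * (r + 1) := by
    rw [← e1]; ring
  have hb1 : b * (r + 1) ≤ a ^ 2 := by nlinarith
  refine ⟨-k, ?_, ?_, ?_, ?_, ?_⟩
  · omega
  · have : 0 < a * (w2 - (-k) * b) := by rw [e2]; nlinarith
    exact pos_of_mul_pos_right this ha.le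
  · rw [e1]; nlinarith
  · rw [e2]; nlinarith
  · have : a * |-k| = |r + 1 - w1| := by
      have e3 : r + 1 - w1 = a * -k := by linarith
      rw [e3, abs_mul, abs_of_pos ha]
    rw [this]
    have := abs_sub (r + 1) w1
    rw [abs_of_pos (show 0 < r + 1 by omega)] at this
    omega

lemma pos_half (p1 p2 q1 q2 : ℤ) (h : p1 * p2 ≤ 0) (h0 : p1 ≠ 0) (hp : |p2| ≤ |p1|)
    (hf : 2 * p1 ^ 2 ≤ |p1 * q2 - p2 * q1|) :
    ∃ s t : ℤ, |s| = 1 ∧ 0 < s * q1 + t * p1 ∧ 0 < s * q2 + t * p2 ∧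
      |p1| * (s * q1 + t * p1) ≤ |p1 * q2 - p2 * q1| ∧
      |p1| * (s * q2 + t * p2) ≤ |p1 * q2 - p2 * q1| ∧ |p1| * |t| ≤ |q1| + |p1| := by
  obtain ⟨σ, hσ, hσp⟩ : ∃ σ : ℤ, (σ = 1 ∨ σ = -1) ∧ |p1| = σ * p1 := by
    rcases abs_choice p1 with h | h
    · exact ⟨1, by simp, by simpa using h⟩
    · exact ⟨-1, by simp, by simpa using h⟩
  obtain ⟨s, hs, hsp⟩ : ∃ s : ℤ, (s = 1 ∨ s = -1) ∧
      |p1 * q2 - p2 * q1| = s * (σ * (p1 * q2 - p2 * q1)) := by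
    rcases hσ with rfl | rfl <;> rcases abs_choice (p1 * q2 - p2 * q1) with h | h
    · exact ⟨1, by simp, by linarith⟩
    · exact ⟨-1, by simp, by linarith⟩
    · exact ⟨-1, by simp, by linarith⟩
    · exact ⟨1, by simp, by linarith⟩
  have hpos : 0 < σ * p1 := by rw [← hσp]; exact abs_pos.mpr h0
  have hss : |s| = 1 := by rcases hs with rfl | rfl <;> simp
  have hb : 0 ≤ -(σ * p2) := by
    rcases hσ with rfl | rfl
    · nlinarith
    · nlinarith
  have hba : -(σ * p2) ≤ σ * p1 := by
    rw [← hσp]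
    refine le_trans ?_ hp
    rcases hσ with rfl | rfl
    · simpa using neg_le_abs p2
    · simpa using le_abs_self p2
  have hsq : (σ * p1) ^ 2 = p1 ^ 2 := by rcases hσ with rfl | rfl <;> ring
  have e : (σ * p1) * (s * q2) + (-(σ * p2)) * (s * q1) = |p1 * q2 - p2 * q1| := by
    rw [hsp]; ring
  obtain ⟨t, h1, h2, h3, h4, h5⟩ := pos_core (σ * p1) (-(σ * p2)) (s * q1) (s * q2) hpos hb hba
    (by rw [e, hsq]; exact hf)
  have hσa : |σ| = 1 := by rcases hσ with rfl | rfl <;> simp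
  refine ⟨s, t * σ, hss, ?_, ?_, ?_, ?_, ?_⟩
  · linarith [mul_assoc t σ p1]
  · linarith [mul_assoc t σ p2]
  · rw [← e, hσp, mul_assoc t]; exact h3
  · rw [← e, hσp, mul_assoc t]; simpa using h4
  · rw [abs_mul, hσa, hσp]; simpa [abs_mul, hss] using h5

lemma pos_exists (u w : ℤ × ℤ × ℤ) (h : u.2.1 * u.2.2 ≤ 0) (hA : 0 < hgt u)
    (hf : 2 * hgt u ^ 2 ≤ |wdg u w|) :
    ∃ s t : ℤ, |s| = 1 ∧ 0 < s * w.2.1 + t * u.2.1 ∧ 0 < s * w.2.2 + t * u.2.2 ∧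
      hgt u * hgt (s • w + t • u) ≤ |wdg u w| ∧ hgt u * |t| ≤ hgt w + hgt u := by
  obtain ⟨u0, p1, p2⟩ := u
  obtain ⟨w0, q1, q2⟩ := w
  simp only [hgt, wdg, Prod.snd_add, Prod.fst_add, Prod.smul_snd, Prod.smul_fst, smul_eq_mul] at *
  rcases le_total |p2| |p1| with hp | hp
  · rw [max_eq_left hp] at *
    rw [sq_abs] at hf
    obtain ⟨s, t, h1, h2, h3, h4, h5, h6⟩ := pos_half p1 p2 q1 q2 h (abs_pos.mp hA) hp hf
    refine ⟨s, t, h1, h2, h3, ?_, ?_⟩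
    · rw [abs_of_pos h2, abs_of_pos h3]
      rcases max_choice (s * q1 + t * p1) (s * q2 + t * p2) with h | h <;> rw [h] <;> assumption
    · exact h6.trans (by gcongr; exact le_max_left _ _)
  · rw [max_eq_right hp] at *
    rw [sq_abs] at hf
    have e : |p1 * q2 - p2 * q1| = |p2 * q1 - p1 * q2| := abs_sub_comm _ _
    rw [e] at hf ⊢
    obtain ⟨s, t, h1, h2, h3, h4, h5, h6⟩ :=
      pos_half p2 p1 q2 q1 (by linarith [mul_comm p1 p2]) (abs_pos.mp hA) hp hf
    refine ⟨s, t, h1, h3, h2, ?_, ?_⟩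
    · rw [abs_of_pos h2, abs_of_pos h3]
      rcases max_choice (s * q1 + t * p1) (s * q2 + t * p2) with h | h <;> rw [h] <;> assumption
    · exact h6.trans (by gcongr; exact le_max_right _ _)

/-- Lemma A -/
lemma lemA {a b ε : ℝ} (hbad : Bad a b ε) (u w : ℤ × ℤ × ℤ) (h : u.2.1 * u.2.2 ≤ 0)
    (hA : 0 < hgt u) (hf : 2 * hgt u ^ 2 ≤ |wdg u w|) :
    ε ≤ (|Lf a b w| + ((hgt w : ℝ) / hgt u + 1) * |Lf a b u|) *
      (|(wdg u w : ℝ)| / hgt u) ^ tau := by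
  obtain ⟨s, t, h1, h2, h3, h4, h5⟩ := pos_exists u w h hA hf
  have hA' : (0:ℝ) < hgt u := by exact_mod_cast hA
  have hs : |(s:ℝ)| = 1 := by exact_mod_cast h1
  have h4' : (hgt u : ℝ) * hgt (s • w + t • u) ≤ |(wdg u w : ℝ)| := by exact_mod_cast h4
  have h5' : (hgt u : ℝ) * |(t:ℝ)| ≤ hgt w + hgt u := by exact_mod_cast h5
  refine (hbad (s • w + t • u) (by simpa using h2) (by simpa using h3)).trans ?_
  have hn : (0:ℝ) ≤ hgt (s • w + t • u) := by exact_mod_cast hgt_nonneg _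
  have hn2 : (0:ℝ) ≤ hgt w := by exact_mod_cast hgt_nonneg _
  gcongr
  · rw [Lf_add, Lf_smul, Lf_smul]
    refine (abs_add_le _ _).trans ?_
    rw [abs_mul, abs_mul, hs, one_mul]
    gcongr
    rw [div_add_one hA'.ne', le_div_iff₀ hA']; linarith
  · linarith [tau_gt]
  · rw [le_div_iff₀ hA']; linarith

lemma posU {a b ε : ℝ} (hbad : Bad a b ε) (u : ℤ × ℤ × ℤ) (h : 0 < u.2.1 * u.2.2) :
    ε ≤ |Lf a b u| * (hgt u : ℝ) ^ tau := by
  rcases pos_and_pos_or_neg_and_neg_of_mul_pos h with ⟨h1, h2⟩ | ⟨h1, h2⟩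
  · exact hbad u h1 h2
  · have := hbad ((-1 : ℤ) • u) (by simpa using h1) (by simpa using h2)
    rw [Lf_smul, hgt_smul] at this
    simpa using this

lemma red_core (a b v1 v2 R : ℤ) (ha : 0 < a) (hb : |b| ≤ a) (haR : a ≤ R)
    (h1 : |v1| ≤ R) (h2 : |v2| ≤ R) (h3 : |v1| = R ∨ |v2| = R)
    (h4 : R ≤ |v1 - a| ∨ R ≤ |v2 - b|) (h5 : R ≤ |v1 + a| ∨ R ≤ |v2 + b|) :
    a * R ≤ |a * v2 - b * v1| := by
  rw [abs_le] at hb h1 h2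
  have key : ∀ X : ℤ, (R ≤ |X| ↔ (R ≤ X ∨ X ≤ -R)) := fun X => by rw [le_abs]; omega
  rw [key] at h4 h5
  rw [key] at h4 h5
  have hm : |v1| = R → v1 = R ∨ v1 = -R := fun h => by
    rcases abs_choice v1 with h' | h' <;> omega
  have hm2 : |v2| = R → v2 = R ∨ v2 = -R := fun h => by
    rcases abs_choice v2 with h' | h' <;> omega
  rw [le_abs]
  rcases h3 with h3 | h3
  · rcases hm h3 with rfl | rfl
    · have h4' : v1 ≤ v2 - b ∨ v2 - b ≤ -v1 := by omega
      rcases h4' with h | h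
      · left; nlinarith
      · right; nlinarith
    · have h5' : R ≤ v2 + b ∨ v2 + b ≤ -R := by omega
      rcases h5' with h | h
      · left; nlinarith
      · right; nlinarith
  · rcases hm2 h3 with rfl | rfl
    · left
      rcases le_total 0 b with hb0 | hb0 <;> rcases le_total 0 v1 with hv | hv
      · rcases hb0.eq_or_lt with rfl | hb0
        · simp
        rcases hv.eq_or_lt with rfl | hv
        · simp
        omega
      · nlinarith
      · nlinarith
      · rcases hb0.eq_or_lt with rfl | hb0
        · simp
        rcases hv.eq_or_lt with rfl | hv
        · simp
        omega
    · right
      rcases le_total 0 b with hb0 | hb0 <;> rcases le_total 0 v1 with hv | hv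
      · nlinarith
      · rcases hb0.eq_or_lt with rfl | hb0
        · simp
        rcases hv.eq_or_lt with rfl | hv
        · simp
        omega
      · rcases hb0.eq_or_lt with rfl | hb0
        · simp
        rcases hv.eq_or_lt with rfl | hv
        · simp
        omega
      · nlinarith

lemma red_half (a b v1 v2 R : ℤ) (ha : a ≠ 0) (hb : |b| ≤ |a|) (haR : |a| ≤ R)
    (h1 : |v1| ≤ R) (h2 : |v2| ≤ R) (h3 : |v1| = R ∨ |v2| = R)
    (h4 : R ≤ |v1 - a| ∨ R ≤ |v2 - b|) (h5 : R ≤ |v1 + a| ∨ R ≤ |v2 + b|) :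
    |a| * R ≤ |a * v2 - b * v1| := by
  rcases ha.lt_or_gt with h | h
  · rw [abs_of_neg h] at *
    have := red_core (-a) (-b) v1 v2 R (by omega) (by simpa using hb) haR h1 h2 h3
      (by simpa using h5) (by simpa [sub_eq_add_neg] using h4)
    refine this.trans (le_of_eq ?_)
    rw [← abs_neg]; congr 1; ring
  · rw [abs_of_pos h] at *
    exact red_core a b v1 v2 R h hb haR h1 h2 h3 h4 h5

lemma reduced (u v : ℤ × ℤ × ℤ) (hA : 0 < hgt u) (hAR : hgt u ≤ hgt v)
    (hm : hgt v ≤ hgt (v - u)) (hp : hgt v ≤ hgt (v + u)) : hgt u * hgt v ≤ |wdg u v| := by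
  obtain ⟨u0, p1, p2⟩ := u
  obtain ⟨w0, q1, q2⟩ := v
  simp only [hgt, wdg, Prod.snd_add, Prod.fst_add, Prod.snd_sub, Prod.fst_sub] at *
  have i1 := le_max_left |q1| |q2|
  have i2 := le_max_right |q1| |q2|
  have i3 : |q1| = max |q1| |q2| ∨ |q2| = max |q1| |q2| := by
    rcases max_choice |q1| |q2| with h | h <;> rw [h] <;> simp
  rw [le_max_iff] at hm hp
  set R := max |q1| |q2|
  rcases le_total |p2| |p1| with h | h
  · rw [max_eq_left h] at *
    exact red_half p1 p2 q1 q2 R (abs_pos.mp hA) h hAR i1 i2 i3 hm hp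
  · rw [max_eq_right h] at *
    rw [abs_sub_comm]
    exact red_half p2 p1 q2 q1 R (abs_pos.mp hA) h hAR i2 i1 i3.symm hm.symm hp.symm

/-- admissible pairs -/
def Pr (a b c : ℝ) (F : ℤ) (u v : ℤ × ℤ × ℤ) : Prop :=
  wdg u v ≠ 0 ∧ |wdg u v| ≤ F ∧
    |Lf a b u * v.2.1 - Lf a b v * u.2.1| ≤ c ∧ |Lf a b u * v.2.2 - Lf a b v * u.2.2| ≤ c

lemma Pr_swap {a b c : ℝ} {F : ℤ} {u v : ℤ × ℤ × ℤ} (h : Pr a b c F u v) : Pr a b c F v u := by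
  obtain ⟨h1, h2, h3, h4⟩ := h
  have e : wdg v u = - wdg u v := by simp [wdg]; ring
  refine ⟨by rw [e]; simpa using h1, by rw [e]; simpa using h2, ?_, ?_⟩
  · rw [abs_sub_comm]; exact h3
  · rw [abs_sub_comm]; exact h4

lemma Pr_add {a b c : ℝ} {F : ℤ} {u v : ℤ × ℤ × ℤ} (h : Pr a b c F u v) (n : ℤ) :
    Pr a b c F u (v + n • u) := by
  obtain ⟨h1, h2, h3, h4⟩ := h
  have e : wdg u (v + n • u) = wdg u v := by simp [wdg]; ring
  refine ⟨by rw [e]; exact h1, by rw [e]; exact h2, ?_, ?_⟩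
  · convert h3 using 2
    rw [Lf_add, Lf_smul]; simp; ring
  · convert h4 using 2
    rw [Lf_add, Lf_smul]; simp; ring

lemma Pr_pos {a b c : ℝ} {F : ℤ} {u v : ℤ × ℤ × ℤ} (h : Pr a b c F u v) : 0 < hgt u := by
  refine lt_of_le_of_ne (hgt_nonneg u) fun h0 => h.1 ?_
  have h1 : |u.2.1| ≤ hgt u := le_max_left _ _
  have h2 : |u.2.2| ≤ hgt u := le_max_right _ _
  rw [← h0, abs_nonpos_iff] at h1 h2
  simp [wdg, h1, h2]

lemma Pr_prim {a b c : ℝ} {F : ℤ} {u v w : ℤ × ℤ × ℤ} (h : Pr a b c F u v) (m n : ℤ)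
    (hm : m ≠ 0) (hn : n ≠ 0) (hw : n • w = m • u) (hlt : hgt w < hgt u) : Pr a b c F w v := by
  have hmn : |m| < |n| := by
    have := congrArg hgt hw
    rw [hgt_smul, hgt_smul] at this
    by_contra hc
    push Not at hc
    have hm' := abs_pos.mpr hm
    have := hgt_nonneg w
    nlinarith [abs_nonneg n]
  have hL := congrArg (Lf a b) hw
  rw [Lf_smul, Lf_smul] at hL
  have h1 := congrArg (fun x : ℤ × ℤ × ℤ => x.2.1) hw
  have h2 := congrArg (fun x : ℤ × ℤ × ℤ => x.2.2) hw
  simp only [Prod.smul_snd, Prod.smul_fst, smul_eq_mul] at h1 h2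
  have hW : n * wdg w v = m * wdg u v := by
    simp only [wdg]; linear_combination v.2.2 * h1 - v.2.1 * h2
  have h1' : (n:ℝ) * w.2.1 = m * u.2.1 := by exact_mod_cast h1
  have h2' : (n:ℝ) * w.2.2 = m * u.2.2 := by exact_mod_cast h2
  have hmn' : |(m:ℝ)| < |(n:ℝ)| := by exact_mod_cast hmn
  have hn' : 0 < |(n:ℝ)| := lt_of_le_of_lt (abs_nonneg _) hmn'
  have aux : ∀ X Y : ℝ, (n:ℝ) * X = m * Y → |X| ≤ |Y| := by
    intro X Y hXY
    have := congrArg abs hXY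
    rw [abs_mul, abs_mul] at this
    refine le_of_mul_le_mul_left (a := |(n:ℝ)|) ?_ hn'
    rw [this]
    gcongr
  obtain ⟨g1, g2, g3, g4⟩ := h
  refine ⟨?_, ?_, ?_, ?_⟩
  · intro h0
    rw [h0, mul_zero] at hW
    rcases mul_eq_zero.mp hW.symm with h | h
    · exact hm h
    · exact g1 h
  · refine le_trans ?_ g2
    have := aux (wdg w v) (wdg u v) (by exact_mod_cast hW)
    exact_mod_cast this
  · exact (aux _ _ (by linear_combination v.2.1 * hL - Lf a b v * h1')).trans g3
  · exact (aux _ _ (by linear_combination v.2.2 * hL - Lf a b v * h2')).trans g4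

/-- `u` is not a proper multiple -/
def Prim (u : ℤ × ℤ × ℤ) : Prop := ∀ (w : ℤ × ℤ × ℤ) (m n : ℤ), m ≠ 0 → n ≠ 0 →
  n • w = m • u → hgt u ≤ hgt w

lemma exists_red {a b c : ℝ} {F : ℤ} {u0 v0 : ℤ × ℤ × ℤ} (h : Pr a b c F u0 v0) :
    ∃ u v, Pr a b c F u v ∧ hgt u ≤ hgt v ∧ hgt v ≤ hgt u0 + hgt v0 ∧
      hgt u * hgt v ≤ |wdg u v| ∧ Prim u := by
  classical
  have hex : ∃ n : ℕ, ∃ u v, Pr a b c F u v ∧ hgt u + hgt v = n :=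
    ⟨(hgt u0 + hgt v0).toNat, u0, v0, h, by
      have := hgt_nonneg u0; have := hgt_nonneg v0; omega⟩
  obtain ⟨u1, v1, hP1, hn1⟩ := Nat.find_spec hex
  have hmin1 : ∀ u' v', Pr a b c F u' v' → hgt u1 + hgt v1 ≤ hgt u' + hgt v' := by
    intro u' v' h'
    have := Nat.find_min' hex ⟨u', v', h', show hgt u' + hgt v' = ((hgt u' + hgt v').toNat : ℕ) by
      have := hgt_nonneg u'; have := hgt_nonneg v'; omega⟩
    have := hgt_nonneg u'; have := hgt_nonneg v'; omega
  obtain ⟨u, v, hP, hle, hmin⟩ : ∃ u v, Pr a b c F u v ∧ hgt u ≤ hgt v ∧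
      ∀ u' v', Pr a b c F u' v' → hgt u + hgt v ≤ hgt u' + hgt v' := by
    rcases le_total (hgt u1) (hgt v1) with h | h
    · exact ⟨u1, v1, hP1, h, hmin1⟩
    · exact ⟨v1, u1, Pr_swap hP1, h, fun u' v' h' => by linarith [hmin1 u' v' h']⟩
  refine ⟨u, v, hP, hle, ?_, ?_, ?_⟩
  · linarith [hmin _ _ h, hgt_nonneg u]
  · apply reduced u v (Pr_pos hP) hle
    · have := hmin _ _ (Pr_add hP (-1))
      simp only [neg_smul, one_smul, ← sub_eq_add_neg] at this
      linarith
    · have := hmin _ _ (Pr_add hP 1)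
      simp only [one_smul] at this
      linarith
  · intro w m n hm hn hw
    by_contra hc
    push Not at hc
    have := hmin _ _ (Pr_prim hP m n hm hn hw hc)
    linarith

lemma lemS {a b ε c : ℝ} (hbad : Bad a b ε) {F : ℤ} {u0 v0 : ℤ × ℤ × ℤ}
    (h : Pr a b c F u0 v0) :
    ∃ (u : ℤ × ℤ × ℤ) (R : ℤ), 0 < hgt u ∧ hgt u ≤ R ∧ R ≤ hgt u0 + hgt v0 ∧
      hgt u * R ≤ F ∧ |Lf a b u| ≤ 2 * c / R ∧ ε ≤ 160 * c * (R : ℝ) ^ tau / hgt u ∧ Prim u := by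
  obtain ⟨u, v, hP, hle, hR, hf, hprim⟩ := exists_red h
  have hA := Pr_pos hP
  obtain ⟨g1, g2, g3, g4⟩ := hP
  have hA' : (0:ℝ) < hgt u := by exact_mod_cast hA
  have hle' : (hgt u : ℝ) ≤ hgt v := by exact_mod_cast hle
  have hR' : (0:ℝ) < hgt v := lt_of_lt_of_le hA' hle'
  have hf' : (hgt u : ℝ) * hgt v ≤ |(wdg u v : ℝ)| := by exact_mod_cast hf
  have hfp : 0 < |(wdg u v : ℝ)| := by
    rw [abs_pos]; exact_mod_cast g1
  have hc : 0 ≤ c := le_trans (abs_nonneg _) g3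
  have u1 : |(u.2.1 : ℝ)| ≤ hgt u := by exact_mod_cast le_max_left _ _
  have u2 : |(u.2.2 : ℝ)| ≤ hgt u := by exact_mod_cast le_max_right _ _
  have v1 : |(v.2.1 : ℝ)| ≤ hgt v := by exact_mod_cast le_max_left _ _
  have v2 : |(v.2.2 : ℝ)| ≤ hgt v := by exact_mod_cast le_max_right _ _
  have hW : (wdg u v : ℝ) = u.2.1 * v.2.2 - u.2.2 * v.2.1 := by simp [wdg]
  have hup : |(wdg u v : ℝ)| ≤ 2 * hgt u * hgt v := by
    rw [hW]
    refine (abs_sub _ _).trans ?_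
    rw [abs_mul, abs_mul]
    have : |(u.2.1 : ℝ)| * |(v.2.2:ℝ)| ≤ hgt u * hgt v := by gcongr
    have : |(u.2.2 : ℝ)| * |(v.2.1:ℝ)| ≤ hgt u * hgt v := by gcongr
    linarith
  have aux : ∀ X y1 y2 H : ℝ, |y1| ≤ H → |y2| ≤ H →
      X * wdg u v = y1 * (Lf a b u * v.2.2 - Lf a b v * u.2.2) -
        y2 * (Lf a b u * v.2.1 - Lf a b v * u.2.1) → |X| * (hgt u * hgt v) ≤ 2 * c * H := by
    intro X y1 y2 H k1 k2 hX
    have hH : 0 ≤ H := le_trans (abs_nonneg _) k1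
    have e := congrArg abs hX
    rw [abs_mul] at e
    calc |X| * (hgt u * hgt v) ≤ |X| * |(wdg u v : ℝ)| := by gcongr
      _ ≤ |y1| * |Lf a b u * v.2.2 - Lf a b v * u.2.2| +
          |y2| * |Lf a b u * v.2.1 - Lf a b v * u.2.1| := by
          rw [e, ← abs_mul, ← abs_mul]; exact abs_sub _ _
      _ ≤ H * c + H * c := by gcongr
      _ = _ := by ring
  have hLu : |Lf a b u| ≤ 2 * c / hgt v := by
    have := aux (Lf a b u) u.2.1 u.2.2 (hgt u) u1 u2 (by rw [hW]; ring)
    rw [le_div_iff₀ hR']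
    refine le_of_mul_le_mul_left (a := (hgt u : ℝ)) ?_ hA'
    linarith
  have hLv : |Lf a b v| ≤ 2 * c / hgt u := by
    have := aux (Lf a b v) v.2.1 v.2.2 (hgt v) v1 v2 (by rw [hW]; ring)
    rw [le_div_iff₀ hA']
    refine le_of_mul_le_mul_left (a := (hgt v : ℝ)) ?_ hR'
    linarith
  refine ⟨u, hgt v, hA, hle, hR, hf.trans g2, hLu, ?_, hprim⟩
  set A : ℝ := ((hgt u : ℤ) : ℝ)
  set R : ℝ := ((hgt v : ℤ) : ℝ)
  have hRt : 0 ≤ R ^ tau := by positivity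
  rcases le_or_gt (u.2.1 * u.2.2) 0 with hs | hs
  · have k := lemA hbad u ((2:ℤ) • v) hs hA (by
      rw [wdg_smul, abs_mul]
      have : hgt u * hgt u ≤ hgt u * hgt v := by gcongr
      simp; nlinarith)
    rw [wdg_smul, Lf_smul, hgt_smul] at k
    push_cast at k
    rw [abs_mul, abs_mul] at k
    simp only [Nat.abs_ofNat] at k
    have b1 : 2 * |(wdg u v : ℝ)| / A ≤ 4 * R := by
      rw [div_le_iff₀ hA']; linarith
    have b2 : (2 * |(wdg u v : ℝ)| / A) ^ tau ≤ 16 * R ^ tau := by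
      calc _ ≤ (4 * R) ^ tau := by
            gcongr
            linarith [tau_gt]
        _ = 4 ^ tau * R ^ tau := Real.mul_rpow (by norm_num) hR'.le
        _ ≤ 4 ^ (2:ℝ) * R ^ tau := by
            gcongr
            · norm_num
            · exact tau_lt.le
        _ = _ := by norm_num
    have b3 : (2 * R / A + 1) * |Lf a b u| ≤ 6 * c / A := by
      calc (2 * R / A + 1) * |Lf a b u| ≤ (2 * R / A + R / A) * (2 * c / R) := by
            gcongr
            rw [le_div_iff₀ hA']; linarith
        _ = _ := by field_simp; ring
    calc ε ≤ _ := k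
      _ ≤ (2 * (2 * c / A) + 6 * c / A) * (16 * R ^ tau) := by gcongr
      _ = _ := by field_simp; ring
  · have k := posU hbad u hs
    calc ε ≤ _ := k
      _ ≤ (2 * c / R) * R ^ tau := by
        gcongr
        linarith [tau_gt]
      _ ≤ (2 * c / A) * R ^ tau := by gcongr
      _ ≤ (160 * c / A) * R ^ tau := by gcongr; norm_num
      _ = _ := by ring

lemma dirichlet (a b : ℝ) (P K : ℕ) (h2 : 2 ≤ P * K) :
    ∃ w : ℤ × ℤ × ℤ, w.2 ≠ 0 ∧ |w.2.1| < P ∧ |w.2.2| < K ∧ |Lf a b w| ≤ 2 / (P * K) := by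
  classical
  set m : ℕ := P * K - 1 with hm
  have hm1 : 1 ≤ m := by omega
  have hm0 : (0:ℝ) < m := by exact_mod_cast hm1
  let g : ℕ × ℕ → ℝ := fun x => a * x.1 + b * x.2
  have hcard : (Finset.range m).card < (Finset.range P ×ˢ Finset.range K).card := by
    rw [Finset.card_product]; simp; omega
  have hmaps : ∀ x ∈ Finset.range P ×ˢ Finset.range K,
      ⌊Int.fract (g x) * m⌋₊ ∈ Finset.range m := by
    intro x _
    rw [Finset.mem_range, Nat.floor_lt (mul_nonneg (Int.fract_nonneg _) hm0.le)]
    have := Int.fract_lt_one (g x)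
    nlinarith
  obtain ⟨x, hx, y, hy, hne, he⟩ := Finset.exists_ne_map_eq_of_card_lt_of_maps_to hcard hmaps
  rw [Finset.mem_product, Finset.mem_range, Finset.mem_range] at hx hy
  refine ⟨(⌊g y⌋ - ⌊g x⌋, (x.1 : ℤ) - y.1, (x.2 : ℤ) - y.2), ?_, ?_, ?_, ?_⟩
  · intro h
    apply hne
    rw [Prod.mk_eq_zero] at h
    ext <;> omega
  · show |(x.1 : ℤ) - y.1| < P
    rw [abs_lt]; omega
  · show |(x.2 : ℤ) - y.2| < K
    rw [abs_lt]; omega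
  · have e : Lf a b (⌊g y⌋ - ⌊g x⌋, (x.1 : ℤ) - y.1, (x.2 : ℤ) - y.2) =
        Int.fract (g x) - Int.fract (g y) := by
      simp only [Lf, Int.fract, g]; push_cast; ring
    rw [e]
    have f1 := Nat.floor_le (mul_nonneg (Int.fract_nonneg (g x)) hm0.le)
    have f2 := Nat.lt_floor_add_one (Int.fract (g x) * m)
    have f3 := Nat.floor_le (mul_nonneg (Int.fract_nonneg (g y)) hm0.le)
    have f4 := Nat.lt_floor_add_one (Int.fract (g y) * m)
    rw [he] at f1 f2
    have hPK : (0:ℝ) < P * K := by exact_mod_cast (by omega : 0 < P * K)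
    have hle : (P * K : ℝ) ≤ 2 * m := by exact_mod_cast (by omega : P * K ≤ 2 * m)
    have : |Int.fract (g x) - Int.fract (g y)| * m ≤ 1 := by
      have e3 : |Int.fract (g x) - Int.fract (g y)| * m =
          |(Int.fract (g x) - Int.fract (g y)) * m| := by rw [abs_mul, abs_of_pos hm0]
      rw [e3, abs_le]
      constructor <;> nlinarith
    rw [le_div_iff₀ hPK]
    nlinarith [abs_nonneg (Int.fract (g x) - Int.fract (g y))]

lemma hgt_pos_iff (u : ℤ × ℤ × ℤ) : 0 < hgt u ↔ u.2 ≠ 0 := by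
  obtain ⟨u0, u1, u2⟩ := u
  simp only [hgt, lt_max_iff, abs_pos, ne_eq, Prod.mk_eq_zero]
  tauto

lemma lemF {a b : ℝ} (h : ZLinIndep a b) (N : ℤ) :
    ∃ δ > 0, ∀ u : ℤ × ℤ × ℤ, 0 < hgt u → hgt u ≤ N → δ ≤ |Lf a b u| := by
  classical
  let S : Finset (ℤ × ℤ) := (Finset.Icc (-N) N ×ˢ Finset.Icc (-N) N).erase 0
  let g : ℤ × ℤ → ℝ := fun x => nint (a * x.1 + b * x.2)
  have hg : ∀ x ∈ S, 0 < g x := by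
    intro x hx
    have hx0 := Finset.ne_of_mem_erase hx
    refine lt_of_le_of_ne (abs_nonneg _) fun h0 => hx0 ?_
    have h0' := abs_eq_zero.mp h0.symm
    have := h (-round (a * x.1 + b * x.2)) x.1 x.2 (by push_cast; linarith)
    ext
    · exact this.2.1
    · exact this.2.2
  have hmem : ∀ u : ℤ × ℤ × ℤ, 0 < hgt u → hgt u ≤ N → u.2 ∈ S := by
    intro u h1 h2
    have k1 : |u.2.1| ≤ hgt u := le_max_left _ _
    have k2 : |u.2.2| ≤ hgt u := le_max_right _ _
    refine Finset.mem_erase.mpr ⟨(hgt_pos_iff u).mp h1, ?_⟩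
    rw [Finset.mem_product, Finset.mem_Icc, Finset.mem_Icc, ← abs_le, ← abs_le]
    omega
  have hle : ∀ u : ℤ × ℤ × ℤ, g u.2 ≤ |Lf a b u| := by
    intro u
    have := round_le (a * u.2.1 + b * u.2.2) (-u.1)
    simp only [g, nint, Lf]
    refine this.trans (le_of_eq ?_)
    congr 1; push_cast; ring
  rcases S.eq_empty_or_nonempty with hS | hS
  · refine ⟨1, one_pos, fun u h1 h2 => ?_⟩
    have := hmem u h1 h2
    rw [hS] at this
    simp at this
  · obtain ⟨x, hx, hmin⟩ := S.exists_min_image g hS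
    exact ⟨g x, hg x hx, fun u h1 h2 => (hmin _ (hmem u h1 h2)).trans (hle u)⟩

lemma lemZ {a b : ℝ} (h : ZLinIndep a b) (N : ℕ) :
    ∃ (z w : ℤ × ℤ × ℤ), (N:ℤ) < hgt w ∧ 0 < hgt z ∧ hgt z < hgt w ∧
      |Lf a b w| < |Lf a b z| ∧ |Lf a b z| ≤ 2 / (hgt w : ℝ) ^ 2 := by
  classical
  obtain ⟨δ, hδ, hN⟩ := lemF h (N + 1)
  have hex : ∃ n : ℕ, ∃ w : ℤ × ℤ × ℤ, 0 < hgt w ∧ hgt w = n ∧ |Lf a b w| < δ := by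
    obtain ⟨K, hK⟩ := exists_nat_gt (2 / δ)
    have hK0 : (0:ℝ) < K := lt_trans (by positivity) hK
    have hK1 : 1 ≤ K := by exact_mod_cast hK0
    obtain ⟨w, h0, -, -, h3⟩ := dirichlet a b 2 K (by omega)
    refine ⟨(hgt w).toNat, w, (hgt_pos_iff w).mpr h0, ?_, ?_⟩
    · have := hgt_nonneg w; omega
    · refine lt_of_le_of_lt h3 ?_
      rw [div_lt_iff₀ (by positivity)]
      rw [div_lt_iff₀ hδ] at hK
      push_cast
      nlinarith
  obtain ⟨w, hw0, hwn, hwδ⟩ := Nat.find_spec hex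
  have hmin : ∀ u, 0 < hgt u → hgt u < hgt w → δ ≤ |Lf a b u| := by
    intro u h1 h2
    by_contra hc
    push Not at hc
    have := Nat.find_min' hex ⟨u, h1, show hgt u = ((hgt u).toNat : ℕ) by omega, hc⟩
    omega
  have hB : (N + 1 : ℤ) < hgt w := by
    by_contra hc
    push Not at hc
    linarith [hN w hw0 hc]
  set B := Nat.find hex
  obtain ⟨z, h0, h1, h2, h3⟩ := dirichlet a b B B (by nlinarith)
  have hz0 := (hgt_pos_iff z).mpr h0
  have hzB : hgt z < hgt w := by rw [hwn]; exact max_lt h1 h2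
  refine ⟨z, w, by omega, hz0, hzB, lt_of_lt_of_le hwδ (hmin z hz0 hzB), ?_⟩
  rw [hwn, sq, Int.cast_natCast]
  exact h3

/-- an integer vector parallel relation -/
lemma par {a b : ℝ} (u w : ℤ × ℤ × ℤ) (hW : wdg u w = 0)
    (h1 : |Lf a b u * w.2.1 - Lf a b w * u.2.1| < 1) :
    w.2.1 • u = u.2.1 • w := by
  have e2 : w.2.1 * u.2.2 = u.2.1 * w.2.2 := by simp only [wdg] at hW; linarith
  have e : Lf a b u * w.2.1 - Lf a b w * u.2.1 = ((w.2.1 * u.1 - u.2.1 * w.1 : ℤ) : ℝ) := by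
    have : (w.2.1 * u.2.2 : ℝ) = u.2.1 * w.2.2 := by exact_mod_cast e2
    simp only [Lf]; push_cast; linear_combination b * this
  rw [e] at h1
  have h1' : |w.2.1 * u.1 - u.2.1 * w.1| < 1 := by exact_mod_cast h1
  rw [Int.abs_lt_one_iff] at h1'
  ext
  · simp; linarith
  · simp; ring
  · simpa using e2

lemma par2 {a b : ℝ} (u w : ℤ × ℤ × ℤ) (hW : wdg u w = 0)
    (h1 : |Lf a b u * w.2.2 - Lf a b w * u.2.2| < 1) :
    w.2.2 • u = u.2.2 • w := by
  have := par (a := b) (b := a) (u.1, u.2.2, u.2.1) (w.1, w.2.2, w.2.1)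
    (by simp only [wdg] at *; linarith) (by
      have e : ∀ x : ℤ × ℤ × ℤ, Lf b a (x.1, x.2.2, x.2.1) = Lf a b x := fun x => by
        simp [Lf]; ring
      rw [e, e]; exact h1)
  rw [Prod.ext_iff, Prod.ext_iff] at this ⊢
  simp at this ⊢
  tauto

lemma lemZP {a b : ℝ} (h : ZLinIndep a b) (N : ℕ) :
    ∃ (z w : ℤ × ℤ × ℤ), (N:ℤ) < hgt w ∧ hgt z < hgt w ∧
      Pr a b (4 / hgt w) |wdg z w| z w := by
  obtain ⟨z, w, hN, hz0, hzw, hL, hLz⟩ := lemZ h (N + 10)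
  have hB : (10:ℝ) < hgt w := by
    have : (10:ℤ) < hgt w := by push_cast at hN; omega
    exact_mod_cast this
  have z1 : |(z.2.1 : ℝ)| ≤ hgt z := by exact_mod_cast le_max_left _ _
  have z2 : |(z.2.2 : ℝ)| ≤ hgt z := by exact_mod_cast le_max_right _ _
  have w1 : |(w.2.1 : ℝ)| ≤ hgt w := by exact_mod_cast le_max_left _ _
  have w2 : |(w.2.2 : ℝ)| ≤ hgt w := by exact_mod_cast le_max_right _ _
  have hzw' : (hgt z : ℝ) < hgt w := by exact_mod_cast hzw
  have aux : ∀ x y : ℝ, |x| ≤ hgt w → |y| ≤ hgt z →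
      |Lf a b z * x - Lf a b w * y| ≤ 4 / hgt w := by
    intro x y hx hy
    refine (abs_sub _ _).trans ?_
    rw [abs_mul, abs_mul]
    calc _ ≤ (2 / (hgt w : ℝ) ^ 2) * hgt w + (2 / (hgt w : ℝ) ^ 2) * hgt w := by
          gcongr
          · exact hL.le.trans hLz
          · exact hy.trans hzw'.le
      _ = _ := by field_simp; norm_num
  have c1 := aux _ _ w1 z1
  have c2 := aux _ _ w2 z2
  have hlt : 4 / (hgt w : ℝ) < 1 := by rw [div_lt_one] <;> linarith
  refine ⟨z, w, by push_cast at hN; omega, hzw, ?_, le_rfl, c1, c2⟩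
  intro hW
  have contra : ∀ n m : ℤ, |n| = hgt w → |m| ≤ hgt z → n • z = m • w → False := by
    intro n m hn hm he
    have := congrArg (fun x => |Lf a b x|) he
    simp only [Lf_smul, abs_mul] at this
    have hn' : |(n:ℝ)| = hgt w := by exact_mod_cast hn
    have hm' : |(m:ℝ)| ≤ hgt z := by exact_mod_cast hm
    rw [hn'] at this
    have k1 : |(m:ℝ)| * |Lf a b w| ≤ hgt w * |Lf a b w| := by gcongr; linarith
    have k2 : (hgt w : ℝ) * |Lf a b w| < hgt w * |Lf a b z| := by gcongr
    linarith
  rcases max_choice |w.2.1| |w.2.2| with hh | hh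
  · exact contra _ _ hh.symm (le_max_left _ _) (par z w hW (lt_of_le_of_lt c1 hlt))
  · exact contra _ _ hh.symm (le_max_right _ _) (par2 z w hW (lt_of_le_of_lt c2 hlt))

/-- conclusion of the second Dirichlet step -/
def D2 (a b : ℝ) (K : ℕ) (u w : ℤ × ℤ × ℤ) : Prop :=
  hgt w ≤ K ∧ |Lf a b w| ≤ 2 / (hgt u * K) ∧ wdg u w ≠ 0 ∧ |wdg u w| ≤ 2 * hgt u * K ∧
    (|wdg u w| < 2 * hgt u ^ 2 → hgt w ≤ 3 * hgt u)

lemma d2_core {a b : ℝ} (u : ℤ × ℤ × ℤ) (hA : 0 < hgt u) (hu : hgt u = |u.2.1|) (K : ℕ)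
    (hAK : hgt u ≤ K) (hK : 100 ≤ K) (hL : |Lf a b u| ≤ 16 / (K:ℝ) ^ 2)
    (hprim : Prim u) : ∃ w, D2 a b K u w := by
  obtain ⟨P, hP⟩ : ∃ P : ℕ, hgt u = P := ⟨(hgt u).toNat, by omega⟩
  have hP1 : 1 ≤ P := by omega
  obtain ⟨w, h0, h1, h2, h3⟩ := dirichlet a b P K (by nlinarith)
  have hu2 : |u.2.2| ≤ hgt u := le_max_right _ _
  have hPK : P ≤ K := by omega
  have hP' : (0:ℝ) < P := by exact_mod_cast hP1
  have hPK' : (P:ℝ) ≤ K := by exact_mod_cast hPK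
  have hK' : (100:ℝ) ≤ K := by exact_mod_cast hK
  refine ⟨w, ?_, ?_, ?_, ?_, ?_⟩
  · exact max_le (by omega) h2.le
  · rw [hP, Int.cast_natCast]; exact h3
  · intro hW
    have w1 : |(w.2.1:ℝ)| ≤ P := by exact_mod_cast h1.le
    have u1 : |(u.2.1:ℝ)| = P := by
      have : |u.2.1| = P := by omega
      exact_mod_cast this
    have key := par u w hW (a := a) (b := b) (by
      refine lt_of_le_of_lt (abs_sub _ _) ?_
      rw [abs_mul, abs_mul, u1]
      calc _ ≤ 16 / (K:ℝ) ^ 2 * K + 2 / (P * K) * P := by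
            gcongr
            exact w1.trans hPK'
        _ = 18 / K := by field_simp; norm_num
        _ < 1 := by rw [div_lt_one] <;> linarith)
    have hu0 : u.2.1 ≠ 0 := by rw [← abs_pos]; omega
    by_cases hw : w.2.1 = 0
    · rw [hw, zero_smul] at key
      have := (smul_eq_zero.mp key.symm).resolve_left hu0
      exact h0 (by rw [this]; rfl)
    · have hle := hprim w w.2.1 u.2.1 hw hu0 key.symm
      have e := congrArg hgt key
      rw [hgt_smul, hgt_smul, ← hu] at e
      have : 0 < |w.2.1| := abs_pos.mpr hw
      nlinarith
  · simp only [wdg]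
    refine (abs_sub _ _).trans ?_
    rw [abs_mul, abs_mul, ← hu]
    have : |u.2.2| * |w.2.1| ≤ hgt u * K := by gcongr; omega
    have : hgt u * |w.2.2| ≤ hgt u * K := by gcongr
    linarith
  · intro hlt
    refine max_le (by omega) ?_
    have e : u.2.1 * w.2.2 = wdg u w + u.2.2 * w.2.1 := by simp only [wdg]; ring
    have e2 := congrArg abs e
    rw [abs_mul, ← hu] at e2
    have e3 := abs_add_le (wdg u w) (u.2.2 * w.2.1)
    rw [abs_mul] at e3
    have : |u.2.2| * |w.2.1| ≤ hgt u * hgt u := by gcongr; omega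
    nlinarith

lemma d2 {a b : ℝ} (u : ℤ × ℤ × ℤ) (hA : 0 < hgt u) (K : ℕ)
    (hAK : hgt u ≤ K) (hK : 100 ≤ K) (hL : |Lf a b u| ≤ 16 / (K:ℝ) ^ 2)
    (hprim : Prim u) : ∃ w, D2 a b K u w := by
  rcases max_choice |u.2.1| |u.2.2| with hh | hh
  · exact d2_core u hA hh K hAK hK hL hprim
  · let sw : ℤ × ℤ × ℤ → ℤ × ℤ × ℤ := fun x => (x.1, x.2.2, x.2.1)
    have eL : ∀ x, Lf b a (sw x) = Lf a b x := fun x => by simp [Lf, sw]; ring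
    have eL2 : ∀ x, Lf a b (sw x) = Lf b a x := fun x => by simp [Lf, sw]; ring
    have eh : ∀ x, hgt (sw x) = hgt x := fun x => by simp [hgt, sw, max_comm]
    have hs : ∀ x, sw (sw x) = x := fun x => rfl
    have hwd : ∀ x, |wdg u (sw x)| = |wdg (sw u) x| := fun x => by
      rw [← abs_neg]; congr 1; simp [wdg, sw]
    have hp : Prim (sw u) := by
      intro w m n hm hn he
      have := hprim (sw w) m n hm hn (by
        have := congrArg sw he
        exact this)
      rw [eh]; rw [eh] at this; exact this
    obtain ⟨w, g1, g2, g3, g4, g5⟩ := d2_core (a := b) (b := a) (sw u) (by rw [eh]; exact hA)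
      (by rw [eh]; exact hh) K (by rw [eh]; exact hAK) hK (by rw [eL]; exact hL) hp
    rw [eh] at g2 g4 g5
    refine ⟨sw w, by rw [eh]; exact g1, by rw [eL2]; exact g2, ?_, by rw [hwd]; exact g4,
      by rw [hwd, eh]; exact g5⟩
    rw [← abs_pos, hwd, abs_pos]; exact g3

lemma step1 {a b ε : ℝ} (h : ZLinIndep a b) (hbad : Bad a b ε) (N : ℕ) :
    ∃ (u : ℤ × ℤ × ℤ) (R : ℤ), (N:ℤ) < hgt u ∧ hgt u ≤ R ∧ |Lf a b u| ≤ 16 / (R:ℝ) ^ 2 ∧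
      ε ≤ 1280 * (R:ℝ) ^ (tau - 1) / hgt u ∧ Prim u := by
  obtain ⟨δ, hδ, hN⟩ := lemF h N
  obtain ⟨B0, hB0⟩ := exists_nat_gt (8 / δ)
  obtain ⟨z, w, hB, hzw, hP⟩ := lemZP h B0
  obtain ⟨u, R, hA, hAR, hR, -, hL, hε, hprim⟩ := lemS hbad hP
  have hB' : (B0:ℝ) < hgt w := by exact_mod_cast hB
  have hB0' : (0:ℝ) < B0 := lt_trans (by positivity) hB0
  have hBp : (0:ℝ) < hgt w := hB0'.trans hB'
  have hA' : (0:ℝ) < hgt u := by exact_mod_cast hA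
  have hR1 : (1:ℝ) ≤ R := by exact_mod_cast (by omega : 1 ≤ R)
  have hRB : (R:ℝ) ≤ 2 * hgt w := by exact_mod_cast (by omega : R ≤ 2 * hgt w)
  have hRp : (0:ℝ) < R := by linarith
  have hc : 4 / (hgt w : ℝ) ≤ 8 / R := by
    rw [div_le_div_iff₀ hBp hRp]; linarith
  refine ⟨u, R, ?_, hAR, ?_, ?_, hprim⟩
  · by_contra hcon
    push Not at hcon
    have k := (hN u hA hcon).trans hL
    have : 2 * (4 / (hgt w : ℝ)) / R ≤ 8 / hgt w := by
      rw [div_le_iff₀ hRp]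
      have : 8 / (hgt w : ℝ) * 1 ≤ 8 / hgt w * R := by gcongr
      calc _ = 8 / (hgt w : ℝ) * 1 := by ring
        _ ≤ _ := this
    have k2 := k.trans this
    rw [le_div_iff₀ hBp] at k2
    rw [div_lt_iff₀ hδ] at hB0
    nlinarith
  · refine hL.trans ?_
    calc _ ≤ 2 * (8 / (R:ℝ)) / R := by gcongr
      _ = _ := by field_simp; norm_num
  · refine hε.trans ?_
    calc _ ≤ 160 * (8 / (R:ℝ)) * (R:ℝ) ^ tau / hgt u := by gcongr
      _ = _ := by rw [Real.rpow_sub_one hRp.ne']; field_simp; norm_num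

lemma step2 {a b ε η M : ℝ} (hbad : Bad a b ε) (hε : 0 < ε) (hη : 0 < η)
    (hM : M = 8448 / (η * ε)) (u : ℤ × ℤ × ℤ) (hA : 0 < hgt u) (K : ℕ)
    (hAK : hgt u ≤ K) (hK : 100 ≤ K) (hL : |Lf a b u| ≤ 16 / (K:ℝ) ^ 2)
    (hprim : Prim u) (hK1 : (K:ℝ) ^ (tau - 1) ≤ ε / 1280 * hgt u)
    (hK2 : η / 2 * (hgt u : ℝ) ^ tau ≤ K) (hs : u.2.1 * u.2.2 ≤ 0) :
    ∃ u', 0 < hgt u' ∧ (hgt u' : ℝ) ≤ 16000 * M ^ tau / (η * ε) ∧ |Lf a b u'| ≤ 100 / K := by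
  obtain ⟨w, g1, g2, g3, g4, g5⟩ := d2 u hA K hAK hK hL hprim
  have hA' : (0:ℝ) < hgt u := by exact_mod_cast hA
  have hAK' : (hgt u : ℝ) ≤ K := by exact_mod_cast hAK
  have hKp : (0:ℝ) < K := by linarith
  have hw0 : (0:ℝ) ≤ hgt w := by exact_mod_cast hgt_nonneg w
  have t0 : 0 ≤ tau := by linarith [tau_gt]
  have hfp : 0 < |(wdg u w : ℝ)| := by rw [abs_pos]; exact_mod_cast g3
  have g1' : (hgt w : ℝ) ≤ K := by exact_mod_cast g1
  have g4' : |(wdg u w : ℝ)| ≤ 2 * hgt u * K := by exact_mod_cast g4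
  have two_pow : (2:ℝ) ^ tau ≤ 4 := by
    calc (2:ℝ) ^ tau ≤ 2 ^ (2:ℝ) := by
          gcongr
          · norm_num
          · exact tau_lt.le
      _ = 4 := by norm_num
  have four_pow : (4:ℝ) ^ tau ≤ 16 := by
    calc (4:ℝ) ^ tau ≤ 4 ^ (2:ℝ) := by
          gcongr
          · norm_num
          · exact tau_lt.le
      _ = 16 := by norm_num
  set A : ℝ := ((hgt u : ℤ) : ℝ) with hAdef
  have hMp : 0 < M := by rw [hM]; positivity
  have hlt : |wdg u w| < 2 * hgt u ^ 2 := by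
    by_contra hc
    push Not at hc
    have k := lemA hbad u w hs hA hc
    have b1 : (|(wdg u w : ℝ)| / A) ^ tau ≤ 4 * (K:ℝ) ^ tau := by
      calc _ ≤ (2 * (K:ℝ)) ^ tau := by
            gcongr
            rw [div_le_iff₀ hA']; linarith
        _ = 2 ^ tau * (K:ℝ) ^ tau := Real.mul_rpow (by norm_num) hKp.le
        _ ≤ _ := by gcongr
    have b2 : ((hgt w : ℝ) / A + 1) * |Lf a b u| ≤ 32 / (A * K) := by
      calc _ ≤ (K / A + K / A) * (16 / (K:ℝ) ^ 2) := by
            gcongr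
            rw [le_div_iff₀ hA']; linarith
        _ = _ := by field_simp; norm_num
    have b3 : ε ≤ 136 * (K:ℝ) ^ (tau - 1) / A := by
      calc ε ≤ _ := k
        _ ≤ (2 / (A * K) + 32 / (A * K)) * (4 * (K:ℝ) ^ tau) := by gcongr
        _ = _ := by rw [Real.rpow_sub_one hKp.ne']; field_simp; norm_num
    rw [le_div_iff₀ hA'] at b3
    nlinarith
  have hw3 : (hgt w : ℝ) ≤ 3 * A := by rw [hAdef]; exact_mod_cast g5 hlt
  -- the multiple
  have hfM : |(wdg u w : ℝ)| ≤ M * A := by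
    have hfi : 0 < |wdg u w| := abs_pos.mpr g3
    set f : ℤ := |wdg u w| with hf
    obtain ⟨k, hk1, hk2, hk3⟩ : ∃ k : ℤ, 0 < k ∧ 2 * hgt u ^ 2 ≤ k * f ∧
        k * f ≤ 4 * hgt u ^ 2 := by
      refine ⟨2 * hgt u ^ 2 / f + 1, ?_, ?_, ?_⟩
      · have : 0 ≤ 2 * hgt u ^ 2 / f := by positivity
        omega
      · have := Int.lt_ediv_add_one_mul_self (2 * hgt u ^ 2) hfi
        linarith
      · have := Int.ediv_mul_le (2 * hgt u ^ 2) hfi.ne'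
        nlinarith
    have hkr : (1:ℝ) ≤ k := by exact_mod_cast hk1
    have hk3' : (k:ℝ) * |(wdg u w : ℝ)| ≤ 4 * A ^ 2 := by
      rw [hAdef]; rw [hf] at hk3; exact_mod_cast hk3
    have q := lemA hbad u (k • w) hs hA (by
      rw [wdg_smul, abs_mul, abs_of_pos hk1]; exact hk2)
    rw [wdg_smul, Lf_smul, hgt_smul, abs_of_pos hk1] at q
    push_cast at q
    rw [abs_mul, abs_mul, abs_of_pos (by linarith : (0:ℝ) < k)] at q
    have b1 : ((k:ℝ) * |(wdg u w : ℝ)| / A) ^ tau ≤ 16 * A ^ tau := by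
      calc _ ≤ (4 * A) ^ tau := by
            gcongr
            rw [div_le_iff₀ hA']; linarith
        _ = 4 ^ tau * A ^ tau := Real.mul_rpow (by norm_num) hA'.le
        _ ≤ _ := by gcongr
    have b2 : ((k:ℝ) * hgt w / A + 1) * |Lf a b u| ≤ 64 * k / (A * K) := by
      calc _ ≤ (k * (3 * A) / A + k) * (16 / (K:ℝ) ^ 2) := by gcongr
        _ = 64 * k / (K * K) := by field_simp; norm_num
        _ ≤ _ := by gcongr
    have b3 : ε ≤ 1056 * k * A ^ tau / (A * K) := by
      calc ε ≤ _ := q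
        _ ≤ (k * (2 / (A * K)) + 64 * k / (A * K)) * (16 * A ^ tau) := by gcongr
        _ = _ := by field_simp; norm_num
    have hAt : 0 < A ^ tau := by positivity
    rw [le_div_iff₀ (by positivity)] at b3
    have b4 : ε * (A * (η / 2 * A ^ tau)) ≤ 1056 * k * A ^ tau := by
      refine le_trans ?_ b3
      gcongr
    have b5 : ε * η * A ≤ 2112 * k := by
      refine le_of_mul_le_mul_right (a := A ^ tau) ?_ hAt
      linarith
    have b6 : ε * η * A * |(wdg u w : ℝ)| ≤ 8448 * A ^ 2 := by
      calc _ ≤ 2112 * k * |(wdg u w : ℝ)| := by gcongr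
        _ ≤ _ := by linarith
    rw [hM, div_mul_eq_mul_div, le_div_iff₀ (by positivity)]
    refine le_of_mul_le_mul_right (a := A) ?_ hA'
    linarith
  have u1 : |(u.2.1 : ℝ)| ≤ A := by
    have : |u.2.1| ≤ hgt u := le_max_left _ _
    rw [hAdef]; exact_mod_cast this
  have u2 : |(u.2.2 : ℝ)| ≤ A := by
    have : |u.2.2| ≤ hgt u := le_max_right _ _
    rw [hAdef]; exact_mod_cast this
  have w1 : |(w.2.1 : ℝ)| ≤ hgt w := by exact_mod_cast le_max_left _ _
  have w2 : |(w.2.2 : ℝ)| ≤ hgt w := by exact_mod_cast le_max_right _ _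
  have aux : ∀ x y : ℝ, |x| ≤ hgt w → |y| ≤ A →
      |Lf a b u * x - Lf a b w * y| ≤ 50 / K := by
    intro x y hx hy
    refine (abs_sub _ _).trans ?_
    rw [abs_mul, abs_mul]
    calc _ ≤ 16 / (K:ℝ) ^ 2 * (3 * K) + 2 / (A * K) * A := by
          gcongr
          exact (hx.trans hw3).trans (by linarith)
      _ = _ := by field_simp; norm_num
  have hP : Pr a b (50 / K) |wdg u w| u w := ⟨g3, le_rfl, aux _ _ w1 u1, aux _ _ w2 u2⟩
  obtain ⟨u', R, hA1, hAR, -, hF, hL', hε', -⟩ := lemS hbad hP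
  have hA1' : (0:ℝ) < hgt u' := by exact_mod_cast hA1
  have hA11 : (1:ℝ) ≤ hgt u' := by exact_mod_cast hA1
  have hR1 : (1:ℝ) ≤ R := by exact_mod_cast (by omega : 1 ≤ R)
  have hF' : (hgt u' : ℝ) * R ≤ |(wdg u w : ℝ)| := by exact_mod_cast hF
  have hRM : (R:ℝ) ≤ M * A := by nlinarith
  refine ⟨u', hA1, ?_, ?_⟩
  · have hAt : 0 < A ^ tau := by positivity
    have b1 : ε ≤ 8000 * (M ^ tau * A ^ tau) / (K * hgt u') := by
      calc ε ≤ _ := hε'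
        _ ≤ 160 * (50 / (K:ℝ)) * (M * A) ^ tau / hgt u' := by gcongr
        _ = _ := by rw [Real.mul_rpow hMp.le hA'.le]; field_simp; norm_num
    rw [le_div_iff₀ (by positivity)] at b1
    rw [le_div_iff₀ (by positivity)]
    have b2 : ε * (η / 2 * A ^ tau * hgt u') ≤ 8000 * (M ^ tau * A ^ tau) := by
      refine le_trans ?_ b1
      gcongr
    refine le_of_mul_le_mul_right (a := A ^ tau) ?_ hAt
    linarith
  · refine hL'.trans ?_
    calc _ ≤ 2 * (50 / (K:ℝ)) / 1 := by gcongr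
      _ = _ := by ring

lemma no_bad {a b ε : ℝ} (h : ZLinIndep a b) (hε : 0 < ε) : ¬ Bad a b ε := by
  intro hbad
  have t1 := tau_gt
  obtain ⟨η, hη⟩ : ∃ η : ℝ, η = (ε / 1280) ^ tau := ⟨_, rfl⟩
  have hηp : 0 < η := by rw [hη]; positivity
  obtain ⟨M, hM⟩ : ∃ M : ℝ, M = 8448 / (η * ε) := ⟨_, rfl⟩
  obtain ⟨Q, hQ⟩ := exists_nat_gt (16000 * M ^ tau / (η * ε))
  obtain ⟨δ, hδ, hF⟩ := lemF h Q
  have hev : ∀ᶠ x : ℝ in Filter.atTop, 4 / η ≤ x ^ (tau - 1) :=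
    (tendsto_rpow_atTop (by linarith : 0 < tau - 1)).eventually_ge_atTop _
  obtain ⟨X, hX⟩ := Filter.eventually_atTop.mp hev
  obtain ⟨N, hN⟩ := exists_nat_gt (max X (max 100 (max (100 / δ) (32 / (η * ε)))))
  simp only [max_lt_iff] at hN
  obtain ⟨n1, n2, n3, n4⟩ := hN
  obtain ⟨u, R, hNu, hAR, hL, hE, hprim⟩ := step1 h hbad N
  have hNu' : (N:ℝ) < hgt u := by exact_mod_cast hNu
  have hAR' : (hgt u : ℝ) ≤ R := by exact_mod_cast hAR
  have hApos : 0 < hgt u := by omega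
  obtain ⟨A, hA⟩ : ∃ A : ℝ, A = hgt u := ⟨_, rfl⟩
  rw [← hA] at hNu' hAR' hE
  have hA0 : 0 < A := by linarith
  have hR0 : (0:ℝ) < R := by linarith
  have hXA := hX A (by linarith)
  have hAt : A ^ tau = A ^ (tau - 1) * A := by
    rw [Real.rpow_sub_one hA0.ne']; field_simp
  have hbig : 4 * A ≤ η * A ^ tau := by
    rw [hAt]
    rw [div_le_iff₀ hηp] at hXA
    nlinarith
  have hηR : η * A ^ tau ≤ R := by
    have h1 : ε / 1280 * A ≤ (R:ℝ) ^ (tau - 1) := by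
      rw [le_div_iff₀ hA0] at hE; linarith
    calc η * A ^ tau = (ε / 1280 * A) ^ tau := by
          rw [hη, Real.mul_rpow (by positivity) hA0.le]
      _ ≤ ((R:ℝ) ^ (tau - 1)) ^ tau := by gcongr
      _ = R := by rw [← Real.rpow_mul hR0.le, tau_mul, Real.rpow_one]
  obtain ⟨K, hK⟩ : ∃ K : ℕ, K = ⌊η * A ^ tau⌋₊ := ⟨_, rfl⟩
  have hKle : (K:ℝ) ≤ η * A ^ tau := by rw [hK]; exact Nat.floor_le (by positivity)
  have hKgt : η * A ^ tau < K + 1 := by rw [hK]; exact Nat.lt_floor_add_one _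
  have hAK : A ≤ K := by linarith
  have hKp : (0:ℝ) < K := by linarith
  have hK2 : η / 2 * A ^ tau ≤ K := by linarith
  have hLK : |Lf a b u| ≤ 16 / (K:ℝ) ^ 2 := by
    refine hL.trans ?_
    gcongr
    linarith
  have hs : u.2.1 * u.2.2 ≤ 0 := by
    by_contra hc
    push Not at hc
    have k := posU hbad u hc
    rw [← hA] at k
    have k2 : ε ≤ 16 / (K:ℝ) ^ 2 * (2 * K / η) := by
      refine k.trans ?_
      gcongr
      rw [le_div_iff₀ hηp]; linarith
    have k3 : 16 / (K:ℝ) ^ 2 * (2 * K / η) = 32 / (η * K) := by field_simp; norm_num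
    rw [k3, le_div_iff₀ (by positivity)] at k2
    rw [div_lt_iff₀ (by positivity)] at n4
    have hNK : (N:ℝ) ≤ K := by linarith
    have : (N:ℝ) * (η * ε) ≤ K * (η * ε) := mul_le_mul_of_nonneg_right hNK (by positivity)
    linarith
  have hK1 : (K:ℝ) ^ (tau - 1) ≤ ε / 1280 * hgt u := by
    rw [← hA]
    calc (K:ℝ) ^ (tau - 1) ≤ ((ε / 1280 * A) ^ tau) ^ (tau - 1) := by
          refine Real.rpow_le_rpow hKp.le ?_ (by linarith)
          rw [Real.mul_rpow (by positivity) hA0.le, ← hη]; exact hKle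
      _ = _ := by
          rw [← Real.rpow_mul (by positivity), mul_comm tau, tau_mul, Real.rpow_one]
  obtain ⟨u', p1, p2, p3⟩ := step2 hbad hε hηp hM u hApos K (by rw [hA] at hAK; exact_mod_cast hAK)
    (by have : (100:ℝ) ≤ K := by linarith
        exact_mod_cast this) hLK hprim hK1 (by rw [← hA]; exact hK2) hs
  have hQ' : hgt u' ≤ Q := by
    have : (hgt u' : ℝ) ≤ Q := by linarith
    exact_mod_cast this
  have := (hF u' p1 hQ').trans p3
  rw [le_div_iff₀ hKp] at this
  rw [div_lt_iff₀ hδ] at n3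
  nlinarith

/-- W.M. Schmidt's theorem (Theorem 1): if 1, α₁, α₂ are linearly independent over ℤ, then
there is a sequence of integer vectors with positive coordinates along which
‖α₁x₁ + α₂x₂‖ · (max{x₁,x₂})^τ → 0. -/
theorem schmidt_positive_approx (α₁ α₂ : ℝ) (h : ZLinIndep α₁ α₂) :
    ∃ x : ℕ → ℤ × ℤ,
      (∀ i, 0 < (x i).1 ∧ 0 < (x i).2) ∧
      Filter.Tendsto
        (fun i => nint (α₁ * (x i).1 + α₂ * (x i).2) *
          ((max (x i).1 (x i).2 : ℤ) : ℝ) ^ tau)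
        Filter.atTop (nhds 0) := by
  have key : ∀ n : ℕ, ∃ x : ℤ × ℤ, (0 < x.1 ∧ 0 < x.2) ∧
      nint (α₁ * x.1 + α₂ * x.2) * ((max x.1 x.2 : ℤ) : ℝ) ^ tau < 1 / ((n:ℝ) + 1) := by
    intro n
    have := no_bad h (show (0:ℝ) < 1 / ((n:ℝ) + 1) by positivity)
    unfold Bad at this
    push Not at this
    obtain ⟨x, h1, h2, h3⟩ := this
    refine ⟨x.2, ⟨h1, h2⟩, lt_of_le_of_lt ?_ h3⟩
    have e : hgt x = max x.2.1 x.2.2 := by rw [hgt, abs_of_pos h1, abs_of_pos h2]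
    have hp : (0:ℝ) ≤ ((max x.2.1 x.2.2 : ℤ) : ℝ) := by
      exact_mod_cast h1.le.trans (le_max_left _ _)
    rw [e]
    gcongr
    have := round_le (α₁ * x.2.1 + α₂ * x.2.2) (-x.1)
    simp only [nint, Lf]
    refine this.trans (le_of_eq ?_)
    congr 1; push_cast; ring
  choose x hx hlt using key
  refine ⟨x, hx, ?_⟩
  refine squeeze_zero (fun i => ?_) (fun i => (hlt i).le) tendsto_one_div_add_atTop_nhds_zero_nat
  have hp : (0:ℝ) ≤ ((max (x i).1 (x i).2 : ℤ) : ℝ) := by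
    exact_mod_cast (hx i).1.le.trans (le_max_left _ _)
  exact mul_nonneg (abs_nonneg _) (Real.rpow_nonneg hp _)
end

section
/- Suppose the real numbers α₁, α₂ satisfy the following Diophantine condition: for some Γ ∈ (0,1) and γ ≥ 2 the inequality ‖α₁m₁ + α₂m₂‖ ≥ Γ / (max{|m₁|, |m₂|})^γ holds for all integer vectors (m₁, m₂) ∈ ℤ² \ {(0,0)}. Then there exist infinitely many integer two-dimensional vectors (x₁, x₂) with x₁ > 0, x₂ > 0 and ‖α₁x₁ + α₂x₂‖ · (max{x₁, x₂})^{g(γ)} ≤ C(Γ). -/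
/-- g(γ) = τ + (2τ − 2)/(τ²γ − 2) -/
noncomputable def gfun (γ : ℝ) : ℝ := tau + (2 * tau - 2) / (tau ^ 2 * γ - 2)

/-- C(Γ) = 2¹⁸ · Γ^{(τ − τ²)/(τ²γ − 2)} -/
noncomputable def Cconst (Γ γ : ℝ) : ℝ := 2 ^ 18 * Γ ^ ((tau - tau ^ 2) / (tau ^ 2 * γ - 2))

open MeasureTheory in
theorem mink3 (A : Matrix (Fin 3) (Fin 3) ℝ) (c : Fin 3 → ℝ) (hc : ∀ i, 0 < c i)
    (hA : A.det ≠ 0) (h : |A.det| < c 0 * c 1 * c 2) :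
    ∃ x : Fin 3 → ℤ, x ≠ 0 ∧ ∀ i, |A.mulVec (fun j => (x j : ℝ)) i| < c i := by
  classical
  set f : (Fin 3 → ℝ) →ₗ[ℝ] (Fin 3 → ℝ) := Matrix.toLin' A with hf
  have hdet : LinearMap.det f = A.det := by simp [hf]
  set box : Set (Fin 3 → ℝ) := Set.univ.pi (fun i => Set.Ioo (-(c i)) (c i)) with hbox
  set s := f ⁻¹' box with hs
  have hbv : volume box = ENNReal.ofReal (8 * (c 0 * c 1 * c 2)) := by
    rw [hbox, Real.volume_pi_Ioo, Fin.prod_univ_three, ← ENNReal.ofReal_mul (by linarith [hc 0]), ← ENNReal.ofReal_mul (by have := hc 0; have := hc 1; apply mul_nonneg <;> linarith)]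
    congr 1; ring
  have hsv : volume s = ENNReal.ofReal |A.det⁻¹| * ENNReal.ofReal (8 * (c 0 * c 1 * c 2)) := by
    rw [hs, Measure.addHaar_preimage_linearMap _ (by rw [hdet]; exact hA), hdet, hbv]
  let b := Pi.basisFun ℝ (Fin 3)
  have hfd := ZSpan.isAddFundamentalDomain' b volume
  have hfv : volume (ZSpan.fundamentalDomain b) = 1 := by
    rw [ZSpan.fundamentalDomain_pi_basisFun, Real.volume_pi_Ico]; simp
  have hpos := abs_pos.mpr hA
  have hsymm : ∀ x ∈ s, -x ∈ s := by
    intro x hx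
    simp only [hs, hbox, Set.mem_preimage, Set.mem_pi, Set.mem_univ, Set.mem_Ioo, true_imp_iff, map_neg, Pi.neg_apply] at hx ⊢
    intro i; have := hx i; constructor <;> linarith
  have hconv : Convex ℝ s := by
    apply Convex.linear_preimage
    exact convex_pi (fun i _ => convex_Ioo _ _)
  have hlt : volume (ZSpan.fundamentalDomain b) * 2 ^ Module.finrank ℝ (Fin 3 → ℝ) < volume s := by
    rw [hfv, hsv, ← ENNReal.ofReal_mul (abs_nonneg _)]
    have : (1:ENNReal) * 2 ^ Module.finrank ℝ (Fin 3 → ℝ) = ENNReal.ofReal 8 := by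
      simp; norm_num
    rw [this]
    apply (ENNReal.ofReal_lt_ofReal_iff_of_nonneg (by norm_num)).mpr
    rw [abs_inv]
    rw [lt_inv_mul_iff₀ hpos]; linarith
  have : Countable (Submodule.span ℤ (Set.range b)).toAddSubgroup := by
    change Countable (Submodule.span ℤ (Set.range b)); infer_instance
  obtain ⟨x, hx0, hxs⟩ := exists_ne_zero_mem_lattice_of_measure_mul_two_pow_lt_measure hfd hsymm hconv hlt
  have hmem : (x : Fin 3 → ℝ) ∈ Submodule.span ℤ (Set.range b) := x.2
  rw [b.mem_span_iff_repr_mem ℤ] at hmem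
  choose y hy using hmem
  have hy' : (fun j => (y j : ℝ)) = (x : Fin 3 → ℝ) := by
    ext j; simpa [b] using hy j
  refine ⟨y, ?_, ?_⟩
  · rintro rfl
    apply hx0
    ext j; rw [← hy']; simp
  · intro i
    rw [hy', abs_lt]
    have := hxs
    simp only [hs, hbox, Set.mem_preimage, Set.mem_pi, Set.mem_univ, Set.mem_Ioo, true_imp_iff] at this
    exact this i


/-- positive lattice point in the span of two integer vectors, main case -/
theorem pos_point_aux (u1 u2 v1 v2 : ℤ) (hu1 : 0 < u1) (hu2 : u2 ≤ 0) (hM : -u2 ≤ u1)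
    (hd : u1 * v2 - u2 * v1 ≠ 0) :
    ∃ a b : ℤ, 0 < a * u1 + b * v1 ∧ 0 < a * u2 + b * v2 ∧
      a * u1 + b * v1 ≤ u1 ∧ u1 * (a * u2 + b * v2) ≤ u1 ^ 2 + |u1 * v2 - u2 * v1| ∧
      |b| * |u1 * v2 - u2 * v1| ≤ u1 ^ 2 + |u1 * v2 - u2 * v1| := by
  set d := u1 * v2 - u2 * v1 with hdd
  have hD : 0 < |d| := abs_pos.mpr hd
  set D := |d| with hDD
  obtain ⟨b, hb1, hb2⟩ : ∃ b : ℤ, u1 ^ 2 < b * d ∧ b * d ≤ u1 ^ 2 + D := by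
    have h1 := Int.emod_add_mul_ediv (u1 ^ 2) D
    have h2 := Int.emod_nonneg (u1 ^ 2) hD.ne'
    have h3 := Int.emod_lt_of_pos (u1 ^ 2) hD
    rcases abs_choice d with h | h
    · refine ⟨u1 ^ 2 / D + 1, ?_, ?_⟩ <;> nlinarith
    · refine ⟨-(u1 ^ 2 / D + 1), ?_, ?_⟩ <;> nlinarith
  obtain ⟨a, ha1, ha2⟩ : ∃ a : ℤ, 0 < a * u1 + b * v1 ∧ a * u1 + b * v1 ≤ u1 := by
    have h1 := Int.emod_add_mul_ediv (-(b * v1)) u1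
    have h2 := Int.emod_nonneg (-(b * v1)) hu1.ne'
    have h3 := Int.emod_lt_of_pos (-(b * v1)) hu1
    refine ⟨(-(b * v1)) / u1 + 1, ?_, ?_⟩ <;> nlinarith
  have key : u1 * (a * u2 + b * v2) = b * d + (a * u1 + b * v1) * u2 := by rw [hdd]; ring
  refine ⟨a, b, ha1, ?_, ha2, ?_, ?_⟩
  · have : 0 < u1 * (a * u2 + b * v2) := by rw [key]; nlinarith
    exact (mul_pos_iff_of_pos_left hu1).mp this
  · rw [key]; nlinarith
  · rw [hDD, ← abs_mul, abs_of_pos (by nlinarith)]; exact hb2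

theorem pos_point (u1 u2 v1 v2 : ℤ) (hu1 : 0 ≤ u1) (hu2 : u2 ≤ 0)
    (hd : u1 * v2 - u2 * v1 ≠ 0) :
    ∃ a b : ℤ, 0 < a * u1 + b * v1 ∧ 0 < a * u2 + b * v2 ∧
      (max |u1| |u2|) * (a * u1 + b * v1) ≤ (max |u1| |u2|) ^ 2 + |u1 * v2 - u2 * v1| ∧
      (max |u1| |u2|) * (a * u2 + b * v2) ≤ (max |u1| |u2|) ^ 2 + |u1 * v2 - u2 * v1| ∧
      |b| * |u1 * v2 - u2 * v1| ≤ (max |u1| |u2|) ^ 2 + |u1 * v2 - u2 * v1| := by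
  rw [abs_of_nonneg hu1, abs_of_nonpos hu2]
  have hD : 0 < |u1 * v2 - u2 * v1| := abs_pos.mpr hd
  rcases le_total (-u2) u1 with h | h
  · rw [max_eq_left h]
    have hu : 0 < u1 := by
      rcases hu1.lt_or_eq with h' | h'
      · exact h'
      · exfalso; apply hd; have : u2 = 0 := by omega
        rw [this, ← h']; ring
    obtain ⟨a, b, h1, h2, h3, h4, h5⟩ := pos_point_aux u1 u2 v1 v2 hu hu2 h hd
    exact ⟨a, b, h1, h2, by nlinarith, h4, h5⟩
  · rw [max_eq_right h]
    have hu : 0 < -u2 := by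
      rcases (neg_nonneg.mpr hu2).lt_or_eq with h' | h'
      · exact h'
      · exfalso; apply hd; have : u1 = 0 := by omega
        have h2 : u2 = 0 := by omega
        rw [this, h2]; ring
    have e : (-u2) * v1 - (-u1) * v2 = u1 * v2 - u2 * v1 := by ring
    obtain ⟨a, b, h1, h2, h3, h4, h5⟩ := pos_point_aux (-u2) (-u1) v2 v1 hu (by omega) (by omega) (by rw [e]; exact hd)
    rw [e] at h4 h5
    refine ⟨-a, b, by linarith, by linarith, ?_, ?_, h5⟩
    · linarith
    · nlinarith

/-- the linear form -/
noncomputable def LL (α₁ α₂ : ℝ) (v : Fin 3 → ℤ) : ℝ := v 0 + α₁ * v 1 + α₂ * v 2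

/-- the height of the vector -/
noncomputable def NN (v : Fin 3 → ℤ) : ℝ := max |(v 1 : ℝ)| |(v 2 : ℝ)|

/-- 2x2 determinant -/
def d2_s1 (a b : Fin 3 → ℤ) : ℤ := a 1 * b 2 - a 2 * b 1

/-- 3x3 determinant -/
def d3 (a b c : Fin 3 → ℤ) : ℤ := a 0 * d2_s1 b c - b 0 * d2_s1 a c + c 0 * d2_s1 a b

theorem d3_eq (α₁ α₂ : ℝ) (a b c : Fin 3 → ℤ) :
    (d3 a b c : ℝ) = LL α₁ α₂ a * d2_s1 b c - LL α₁ α₂ b * d2_s1 a c + LL α₁ α₂ c * d2_s1 a b := by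
  simp only [d3, d2_s1, LL]; push_cast; ring

theorem LL_comb (α₁ α₂ : ℝ) (p q : ℤ) (a b : Fin 3 → ℤ) :
    LL α₁ α₂ (p • a + q • b) = p * LL α₁ α₂ a + q * LL α₁ α₂ b := by
  simp [LL]; ring

theorem NN_nonneg (v : Fin 3 → ℤ) : 0 ≤ NN v := le_max_of_le_left (abs_nonneg _)
theorem abs1_le (v : Fin 3 → ℤ) : |(v 1 : ℝ)| ≤ NN v := le_max_left _ _
theorem abs2_le (v : Fin 3 → ℤ) : |(v 2 : ℝ)| ≤ NN v := le_max_right _ _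

theorem NN_int (v : Fin 3 → ℤ) : NN v = ((max |v 1| |v 2| : ℤ) : ℝ) := by
  simp [NN]

theorem NN_nat (v : Fin 3 → ℤ) : ∃ n : ℕ, NN v = n := by
  refine ⟨(max |v 1| |v 2|).toNat, ?_⟩
  rw [NN_int]
  have : 0 ≤ max |v 1| |v 2| := le_max_of_le_left (abs_nonneg _)
  exact_mod_cast (Int.toNat_of_nonneg this).symm

theorem NN_one_le (v : Fin 3 → ℤ) (h : 0 < NN v) : 1 ≤ NN v := by
  obtain ⟨n, hn⟩ := NN_nat v
  rw [hn] at h ⊢; exact_mod_cast h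

theorem NN_succ_le (v w : Fin 3 → ℤ) (h : NN v < NN w) : NN v + 1 ≤ NN w := by
  obtain ⟨n, hn⟩ := NN_nat v
  obtain ⟨m, hm⟩ := NN_nat w
  rw [hn, hm] at h ⊢; exact_mod_cast h

theorem NN_neg (v : Fin 3 → ℤ) : NN (-v) = NN v := by simp [NN]
theorem LL_neg (α₁ α₂ : ℝ) (v : Fin 3 → ℤ) : LL α₁ α₂ (-v) = - LL α₁ α₂ v := by
  simp [LL]; ring

theorem d2_le_gen (a b : Fin 3 → ℤ) : |(d2_s1 a b : ℝ)| ≤ 2 * (NN a * NN b) := by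
  simp only [d2_s1]; push_cast
  have h1 : |(a 1 : ℝ) * b 2| ≤ NN a * NN b := by
    rw [abs_mul]; exact mul_le_mul (abs1_le a) (abs2_le b) (abs_nonneg _) (NN_nonneg a)
  have h2 : |(a 2 : ℝ) * b 1| ≤ NN a * NN b := by
    rw [abs_mul]; exact mul_le_mul (abs2_le a) (abs1_le b) (abs_nonneg _) (NN_nonneg a)
  have := abs_sub (a 1 * b 2 : ℝ) (a 2 * b 1)
  linarith

theorem d2_le (a b : Fin 3 → ℤ) (ha1 : 0 ≤ a 1) (ha2 : a 2 ≤ 0) (hb1 : 0 ≤ b 1) (hb2 : b 2 ≤ 0) :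
    |(d2_s1 a b : ℝ)| ≤ NN a * NN b := by
  have ha1' : (0:ℝ) ≤ a 1 := by exact_mod_cast ha1
  have ha2' : (a 2 : ℝ) ≤ 0 := by exact_mod_cast ha2
  have hb1' : (0:ℝ) ≤ b 1 := by exact_mod_cast hb1
  have hb2' : (b 2 : ℝ) ≤ 0 := by exact_mod_cast hb2
  have h1 := abs1_le a
  have h2 := abs2_le a
  have h3 := abs1_le b
  have h4 := abs2_le b
  rw [abs_of_nonneg ha1'] at h1
  rw [abs_of_nonneg hb1'] at h3
  rw [abs_of_nonpos ha2'] at h2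
  rw [abs_of_nonpos hb2'] at h4
  simp only [d2_s1]; push_cast
  have e1 : (a 1 : ℝ) * (-b 2) ≤ NN a * NN b := mul_le_mul h1 h4 (by linarith) (NN_nonneg a)
  have e2 : (-a 2 : ℝ) * (b 1) ≤ NN a * NN b := mul_le_mul h2 h3 (by linarith) (NN_nonneg a)
  have e3 : 0 ≤ (a 1 : ℝ) * (-b 2) := mul_nonneg ha1' (by linarith)
  have e4 : 0 ≤ (-a 2 : ℝ) * (b 1) := mul_nonneg (by linarith) hb1'
  rw [abs_le]; constructor <;> linarith

/-- positive points near the plane of `u`, `v` -/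
theorem pos_vec (α₁ α₂ : ℝ) (u v : Fin 3 → ℤ) (hu1 : 0 ≤ u 1) (hu2 : u 2 ≤ 0)
    (hd : d2_s1 u v ≠ 0) (hM : 0 < NN u) :
    ∃ x : Fin 3 → ℤ, 0 < x 1 ∧ 0 < x 2 ∧
      (x 1 : ℝ) ≤ NN u + |(d2_s1 u v : ℝ)| / NN u ∧ (x 2 : ℝ) ≤ NN u + |(d2_s1 u v : ℝ)| / NN u ∧
      |LL α₁ α₂ x| ≤ (NN u + |(d2_s1 u v : ℝ)| / NN u) / |(d2_s1 u v : ℝ)| *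
        (2 * NN v * |LL α₁ α₂ u| + NN u * |LL α₁ α₂ v|) := by
  obtain ⟨a, b, h1, h2, h3, h4, h5⟩ := pos_point (u 1) (u 2) (v 1) (v 2) hu1 hu2 hd
  have hD : 0 < |(d2_s1 u v : ℝ)| := abs_pos.mpr (by exact_mod_cast hd)
  have hdd : u 1 * v 2 - u 2 * v 1 = d2_s1 u v := rfl
  rw [hdd] at h3 h4 h5
  have h3' : NN u * ((a * u 1 + b * v 1 : ℤ) : ℝ) ≤ NN u ^ 2 + |(d2_s1 u v : ℝ)| := by
    rw [NN_int]; exact_mod_cast h3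
  have h4' : NN u * ((a * u 2 + b * v 2 : ℤ) : ℝ) ≤ NN u ^ 2 + |(d2_s1 u v : ℝ)| := by
    rw [NN_int]; exact_mod_cast h4
  have h5' : |(b : ℝ)| * |(d2_s1 u v : ℝ)| ≤ NN u ^ 2 + |(d2_s1 u v : ℝ)| := by
    rw [NN_int]; exact_mod_cast h5
  set D := |(d2_s1 u v : ℝ)| with hDD
  set X := NN u + D / NN u with hX
  have hXM : NN u * X = NN u ^ 2 + D := by rw [hX]; field_simp
  have hx1 : ((a * u 1 + b * v 1 : ℤ) : ℝ) ≤ X := by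
    rw [← hXM] at h3'; exact le_of_mul_le_mul_left h3' hM
  have hx2 : ((a * u 2 + b * v 2 : ℤ) : ℝ) ≤ X := by
    rw [← hXM] at h4'; exact le_of_mul_le_mul_left h4' hM
  have hX0 : 0 < X := by rw [hX]; positivity
  refine ⟨a • u + b • v, by simpa using h1, by simpa using h2, by simpa using hx1, by simpa using hx2, ?_⟩
  rw [LL_comb]
  have p1 : (0:ℝ) < ((a * u 1 + b * v 1 : ℤ) : ℝ) := by exact_mod_cast h1
  have p2 : (0:ℝ) < ((a * u 2 + b * v 2 : ℤ) : ℝ) := by exact_mod_cast h2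
  have ha : |(a : ℝ)| * D ≤ 2 * X * NN v := by
    rw [hDD, ← abs_mul]
    have : (a : ℝ) * d2_s1 u v = ((a * u 1 + b * v 1 : ℤ) : ℝ) * v 2 - ((a * u 2 + b * v 2 : ℤ) : ℝ) * v 1 := by
      simp only [d2_s1]; push_cast; ring
    rw [this]
    refine (abs_sub _ _).trans ?_
    rw [abs_mul, abs_mul, abs_of_pos p1, abs_of_pos p2]
    have := mul_le_mul hx1 (abs2_le v) (abs_nonneg _) hX0.le
    have := mul_le_mul hx2 (abs1_le v) (abs_nonneg _) hX0.le
    linarith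
  have hb : |(b : ℝ)| * D ≤ X * NN u := by rw [mul_comm X, hXM]; exact h5'
  have := abs_add_le ((a:ℝ) * LL α₁ α₂ u) (b * LL α₁ α₂ v)
  rw [abs_mul, abs_mul] at this
  refine this.trans ?_
  rw [div_mul_eq_mul_div, le_div_iff₀ hD]
  have q1 := mul_le_mul_of_nonneg_right ha (abs_nonneg (LL α₁ α₂ u))
  have q2 := mul_le_mul_of_nonneg_right hb (abs_nonneg (LL α₁ α₂ v))
  nlinarith

/-- best approximations -/
def Best (α₁ α₂ : ℝ) (v : Fin 3 → ℤ) : Prop :=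
  0 < NN v ∧ ∀ x, 0 < NN x → NN x ≤ NN v → |LL α₁ α₂ v| ≤ |LL α₁ α₂ x|

/-- `w` is the next best approximation after `v` -/
def Nxt (α₁ α₂ : ℝ) (v w : Fin 3 → ℤ) : Prop :=
  NN v < NN w ∧ |LL α₁ α₂ w| < |LL α₁ α₂ v| ∧
    ∀ x, 0 < NN x → NN x < NN w → |LL α₁ α₂ v| ≤ |LL α₁ α₂ x|

theorem exists_min (α₁ α₂ : ℝ) (R : ℕ) (hR : 1 ≤ R) :
    ∃ v, 0 < NN v ∧ NN v ≤ R ∧ ∀ x, 0 < NN x → NN x ≤ R → |LL α₁ α₂ v| ≤ |LL α₁ α₂ x| := by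
  set S : Finset (ℤ × ℤ) := ((Finset.Icc (-(R:ℤ)) R) ×ˢ (Finset.Icc (-(R:ℤ)) R)).erase 0 with hS
  have hne : S.Nonempty := ⟨(1, 0), by
    simp only [hS, Finset.mem_erase, Finset.mem_product, Finset.mem_Icc, ne_eq]
    refine ⟨by decide, ⟨?_, ?_⟩, ?_, ?_⟩ <;> simp <;> omega⟩
  obtain ⟨p, hp, hmin⟩ := S.exists_min_image (fun p => |α₁ * p.1 + α₂ * p.2 - round (α₁ * p.1 + α₂ * p.2)|) hne
  have memS : ∀ x : Fin 3 → ℤ, (0 < NN x ∧ NN x ≤ R) ↔ (x 1, x 2) ∈ S := by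
    intro x
    simp only [hS, Finset.mem_erase, Finset.mem_product, Finset.mem_Icc, ne_eq]
    rw [NN_int, ← Int.cast_natCast R, Int.cast_pos, Int.cast_le, max_le_iff, abs_le, abs_le, lt_max_iff, abs_pos, abs_pos]
    simp only [Prod.mk_eq_zero]; tauto
  refine ⟨![-round (α₁ * p.1 + α₂ * p.2), p.1, p.2], ?_⟩
  have hv := (memS ![-round (α₁ * p.1 + α₂ * p.2), p.1, p.2]).mpr (by simpa using hp)
  refine ⟨hv.1, hv.2, ?_⟩
  intro x hx1 hx2
  have h1 := hmin _ ((memS x).mp ⟨hx1, hx2⟩)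
  have h2 := round_le (α₁ * x 1 + α₂ * x 2) (-(x 0))
  have e : |LL α₁ α₂ x| = |α₁ * x 1 + α₂ * x 2 - ((-(x 0) : ℤ) : ℝ)| := by
    congr 1; simp [LL]; ring
  have e2 : |LL α₁ α₂ ![-round (α₁ * p.1 + α₂ * p.2), p.1, p.2]| = |α₁ * p.1 + α₂ * p.2 - round (α₁ * p.1 + α₂ * p.2)| := by
    congr 1; simp [LL]; ring
  rw [e, e2]; exact h1.trans h2

theorem mink_box (α₁ α₂ e c : ℝ) (he : 0 < e) (he1 : e ≤ 1) (hc : 0 < c) (h : 1 < e * c ^ 2) :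
    ∃ x, 0 < NN x ∧ NN x < c ∧ |LL α₁ α₂ x| < e := by
  have hdet : (!![1, α₁, α₂; 0, 1, 0; 0, 0, 1] : Matrix (Fin 3) (Fin 3) ℝ).det = 1 := by
    simp [Matrix.det_fin_three]
  obtain ⟨x, hx0, hx⟩ := mink3 !![1, α₁, α₂; 0, 1, 0; 0, 0, 1] ![e, c, c]
    (by intro i; fin_cases i <;> simp [he, hc]) (by rw [hdet]; norm_num) (by rw [hdet]; simp; nlinarith)
  have h0 := hx 0
  have h1 := hx 1
  have h2 := hx 2
  simp [Matrix.mulVec, dotProduct, Fin.sum_univ_three] at h0 h1 h2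
  have h0' : |LL α₁ α₂ x| < e := h0
  refine ⟨x, ?_, max_lt h1 h2, h0'⟩
  by_contra hcon
  have hN : NN x = 0 := le_antisymm (not_lt.mp hcon) (NN_nonneg x)
  have a1 := abs1_le x
  have a2 := abs2_le x
  rw [hN] at a1 a2
  have b1 : (x 1 : ℝ) = 0 := abs_eq_zero.mp (le_antisymm a1 (abs_nonneg _))
  have b2 : (x 2 : ℝ) = 0 := abs_eq_zero.mp (le_antisymm a2 (abs_nonneg _))
  rw [LL, b1, b2] at h0'
  simp only [mul_zero, add_zero] at h0'
  have c0 : |x 0| < 1 := by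
    have : |(x 0 : ℝ)| < 1 := h0'.trans_le he1
    exact_mod_cast this
  apply hx0
  ext i
  fin_cases i
  · simpa using Int.abs_lt_one_iff.mp c0
  · simpa using b1
  · simpa using b2

theorem best_le_one (α₁ α₂ : ℝ) (v : Fin 3 → ℤ) (hv : Best α₁ α₂ v) : |LL α₁ α₂ v| ≤ 1 := by
  have h := hv.2 ![-round (α₁ * v 1 + α₂ * v 2), v 1, v 2] (by simpa [NN] using hv.1) (by simp [NN])
  have e2 : |LL α₁ α₂ ![-round (α₁ * v 1 + α₂ * v 2), v 1, v 2]| = |α₁ * v 1 + α₂ * v 2 - round (α₁ * v 1 + α₂ * v 2)| := by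
    congr 1; simp [LL]; ring
  rw [e2] at h
  have := abs_sub_round (α₁ * v 1 + α₂ * v 2)
  linarith

theorem exists_nxt (α₁ α₂ : ℝ) (hL : ∀ x, 0 < NN x → LL α₁ α₂ x ≠ 0) (v : Fin 3 → ℤ)
    (hv : Best α₁ α₂ v) : ∃ w, Best α₁ α₂ w ∧ Nxt α₁ α₂ v w := by
  have hz : 0 < |LL α₁ α₂ v| := abs_pos.mpr (hL v hv.1)
  have hex : ∃ n : ℕ, ∃ x, 0 < NN x ∧ NN x = n ∧ |LL α₁ α₂ x| < |LL α₁ α₂ v| := by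
    have h1 := best_le_one α₁ α₂ v hv
    obtain ⟨x, hx1, hx2, hx3⟩ := mink_box α₁ α₂ (|LL α₁ α₂ v|) (2 / |LL α₁ α₂ v|) hz h1 (by positivity) (by
      have : |LL α₁ α₂ v| * (2 / |LL α₁ α₂ v|) ^ 2 = 4 / |LL α₁ α₂ v| := by field_simp; norm_num
      rw [this, lt_div_iff₀ hz]; linarith)
    obtain ⟨n, hn⟩ := NN_nat x
    exact ⟨n, x, hx1, hn, hx3⟩
  classical
  set n := Nat.find hex with hn
  obtain ⟨x, hx1, hx2, hx3⟩ := Nat.find_spec hex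
  have hmin : ∀ y, 0 < NN y → |LL α₁ α₂ y| < |LL α₁ α₂ v| → (n:ℝ) ≤ NN y := by
    intro y hy1 hy2
    obtain ⟨k, hk⟩ := NN_nat y
    have := Nat.find_min' hex ⟨y, hy1, hk, hy2⟩
    rw [hk]; exact_mod_cast this
  obtain ⟨w, hw1, hw2, hw3⟩ := exists_min α₁ α₂ n (by
    rw [hx2] at hx1; exact_mod_cast hx1)
  have hwv : |LL α₁ α₂ w| < |LL α₁ α₂ v| := (hw3 x hx1 hx2.le).trans_lt hx3
  have hwn : NN w = n := le_antisymm hw2 (hmin w hw1 hwv)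
  refine ⟨w, ⟨hw1, ?_⟩, ?_, hwv, ?_⟩
  · rw [hwn]; exact hw3
  · by_contra hcon
    have := hv.2 w hw1 (not_lt.mp hcon)
    linarith
  · intro y hy1 hy2
    by_contra hcon
    have := hmin y hy1 (not_le.mp hcon)
    linarith

theorem nxt_mink (α₁ α₂ : ℝ) (a b : Fin 3 → ℤ) (ha : Best α₁ α₂ a) (h : Nxt α₁ α₂ a b) :
    |LL α₁ α₂ a| * NN b ^ 2 ≤ 1 := by
  by_contra hcon
  have hb : 0 < NN b := ha.1.trans h.1
  have hz : 0 < |LL α₁ α₂ a| := (abs_nonneg _).trans_lt h.2.1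
  obtain ⟨x, hx1, hx2, hx3⟩ := mink_box α₁ α₂ _ _ hz (best_le_one α₁ α₂ a ha) hb (not_le.mp hcon)
  have := h.2.2 x hx1 hx2
  linarith

theorem nxt_pos (α₁ α₂ : ℝ) (a b : Fin 3 → ℤ) (h : Nxt α₁ α₂ a b) :
    0 < |LL α₁ α₂ a| := (abs_nonneg _).trans_lt h.2.1

theorem nxt_not_par (α₁ α₂ : ℝ) (a b : Fin 3 → ℤ) (ha : Best α₁ α₂ a) (h : Nxt α₁ α₂ a b)
    (h1 : LL α₁ α₂ a * b 1 - LL α₁ α₂ b * a 1 = 0) (h2 : LL α₁ α₂ a * b 2 - LL α₁ α₂ b * a 2 = 0) :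
    False := by
  have hz := nxt_pos α₁ α₂ a b h
  have hNb : 0 < NN b := ha.1.trans h.1
  have key : |LL α₁ α₂ b| * NN a < |LL α₁ α₂ a| * NN b := by
    have := mul_lt_mul'' h.2.1 h.1 (abs_nonneg _) (NN_nonneg a)
    linarith
  have e1 : |LL α₁ α₂ a| * |(b 1 : ℝ)| = |LL α₁ α₂ b| * |(a 1 : ℝ)| := by
    rw [← abs_mul, ← abs_mul]; congr 1; linarith
  have e2 : |LL α₁ α₂ a| * |(b 2 : ℝ)| = |LL α₁ α₂ b| * |(a 2 : ℝ)| := by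
    rw [← abs_mul, ← abs_mul]; congr 1; linarith
  have f1 := mul_le_mul_of_nonneg_left (abs1_le a) (abs_nonneg (LL α₁ α₂ b))
  have f2 := mul_le_mul_of_nonneg_left (abs2_le a) (abs_nonneg (LL α₁ α₂ b))
  rcases max_choice |(b 1 : ℝ)| |(b 2 : ℝ)| with hm | hm
  · have : NN b = |(b 1 : ℝ)| := hm
    rw [this] at key; linarith
  · have : NN b = |(b 2 : ℝ)| := hm
    rw [this] at key; linarith

theorem h_le (α₁ α₂ : ℝ) (a b : Fin 3 → ℤ) (h : Nxt α₁ α₂ a b) (s t : ℝ)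
    (hs : |s| ≤ NN a) (ht : |t| ≤ NN b) :
    |LL α₁ α₂ a * t - LL α₁ α₂ b * s| ≤ 2 * (|LL α₁ α₂ a| * NN b) := by
  refine (abs_sub _ _).trans ?_
  rw [abs_mul, abs_mul]
  have f1 := mul_le_mul_of_nonneg_left ht (abs_nonneg (LL α₁ α₂ a))
  have f2 := mul_le_mul h.2.1.le (hs.trans h.1.le) (abs_nonneg _) (abs_nonneg _)
  linarith

theorem nxt_d2 (α₁ α₂ : ℝ) (a b : Fin 3 → ℤ) (ha : Best α₁ α₂ a) (h : Nxt α₁ α₂ a b)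
    (hb : 4 ≤ NN b) : d2_s1 a b ≠ 0 := by
  intro hd
  have hm := nxt_mink α₁ α₂ a b ha h
  have hz := nxt_pos α₁ α₂ a b h
  have hsm : 2 * (|LL α₁ α₂ a| * NN b) < 1 := by nlinarith
  have g1 := h_le α₁ α₂ a b h _ _ (abs1_le a) (abs1_le b)
  have g2 := h_le α₁ α₂ a b h _ _ (abs2_le a) (abs2_le b)
  have hdr : (a 1 : ℝ) * b 2 - a 2 * b 1 = 0 := by
    have : ((d2_s1 a b : ℤ) : ℝ) = 0 := by rw [hd]; simp
    simpa [d2_s1] using this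
  have e1 : LL α₁ α₂ a * b 1 - LL α₁ α₂ b * a 1 = ((a 0 * b 1 - b 0 * a 1 : ℤ) : ℝ) := by
    simp only [LL]; push_cast; linear_combination -α₂ * hdr
  have e2 : LL α₁ α₂ a * b 2 - LL α₁ α₂ b * a 2 = ((a 0 * b 2 - b 0 * a 2 : ℤ) : ℝ) := by
    simp only [LL]; push_cast; linear_combination α₁ * hdr
  apply nxt_not_par α₁ α₂ a b ha h
  · rw [e1] at g1 ⊢
    have : |a 0 * b 1 - b 0 * a 1| < 1 := by exact_mod_cast g1.trans_lt hsm
    rw [Int.abs_lt_one_iff.mp this]; simp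
  · rw [e2] at g2 ⊢
    have : |a 0 * b 2 - b 0 * a 2| < 1 := by exact_mod_cast g2.trans_lt hsm
    rw [Int.abs_lt_one_iff.mp this]; simp

theorem prim (α₁ α₂ : ℝ) (a b x : Fin 3 → ℤ) (h : Nxt α₁ α₂ a b)
    (hd : d2_s1 a b ≠ 0) (hx : d3 a b x = 0) : ∃ p q : ℤ, x = p • a + q • b := by
  have hdr : (d2_s1 a b : ℝ) ≠ 0 := by exact_mod_cast hd
  have hzb := h.2.1
  have hab := h.1
  set p : ℝ := (d2_s1 x b : ℝ) / d2_s1 a b with hp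
  set q : ℝ := (d2_s1 a x : ℝ) / d2_s1 a b with hq
  have hx0 : (x 0 : ℝ) = p * a 0 + q * b 0 := by
    have : ((d3 a b x : ℤ) : ℝ) = 0 := by rw [hx]; simp
    rw [hp, hq]; field_simp
    simp only [d3, d2_s1] at this ⊢; push_cast at this ⊢; linear_combination this
  have hx1 : (x 1 : ℝ) = p * a 1 + q * b 1 := by
    rw [hp, hq]; field_simp
    simp only [d2_s1]; push_cast; ring
  have hx2 : (x 2 : ℝ) = p * a 2 + q * b 2 := by
    rw [hp, hq]; field_simp
    simp only [d2_s1]; push_cast; ring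
  have hp2 := abs_sub_round p
  have hq2 := abs_sub_round q
  set P := round p with hP
  set Q := round q with hQ
  set y : Fin 3 → ℤ := x - (P • a + Q • b) with hy
  have y0 : (y 0 : ℝ) = (p - P) * a 0 + (q - Q) * b 0 := by
    simp [hy]; rw [hx0]; ring
  have y1 : (y 1 : ℝ) = (p - P) * a 1 + (q - Q) * b 1 := by
    simp [hy]; rw [hx1]; ring
  have y2 : (y 2 : ℝ) = (p - P) * a 2 + (q - Q) * b 2 := by
    simp [hy]; rw [hx2]; ring
  have yL : LL α₁ α₂ y = (p - P) * LL α₁ α₂ a + (q - Q) * LL α₁ α₂ b := by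
    simp only [LL]; rw [y0, y1, y2]; ring
  have bnd : ∀ s t A B : ℝ, |s| ≤ A → |t| ≤ B → |(p - P) * s + (q - Q) * t| ≤ (A + B) / 2 := by
    intro s t A B hs ht
    refine (abs_add_le _ _).trans ?_
    rw [abs_mul, abs_mul]
    have := mul_le_mul hp2 hs (abs_nonneg _) (by norm_num)
    have := mul_le_mul hq2 ht (abs_nonneg _) (by norm_num)
    linarith
  have hNy : NN y ≤ (NN a + NN b) / 2 := by
    apply max_le
    · rw [y1]; exact bnd _ _ _ _ (abs1_le a) (abs1_le b)
    · rw [y2]; exact bnd _ _ _ _ (abs2_le a) (abs2_le b)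
  have hLy : |LL α₁ α₂ y| ≤ (|LL α₁ α₂ a| + |LL α₁ α₂ b|) / 2 := by
    rw [yL]; exact bnd _ _ _ _ le_rfl le_rfl
  have hN0 : NN y = 0 := by
    by_contra hne
    have hpos : 0 < NN y := lt_of_le_of_ne (NN_nonneg y) (Ne.symm hne)
    have := h.2.2 y hpos (by linarith)
    linarith
  have a1 := abs1_le y
  have a2 := abs2_le y
  rw [hN0] at a1 a2
  have b1 : (y 1 : ℝ) = 0 := abs_eq_zero.mp (le_antisymm a1 (abs_nonneg _))
  have b2 : (y 2 : ℝ) = 0 := abs_eq_zero.mp (le_antisymm a2 (abs_nonneg _))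
  have hpp : p - P = 0 := by
    have : (p - P) * d2_s1 a b = 0 := by
      simp only [d2_s1]; push_cast
      linear_combination (b 2 : ℝ) * b1 - (b 1 : ℝ) * b2 - (b 2 : ℝ) * y1 + (b 1 : ℝ) * y2
    exact (mul_eq_zero.mp this).resolve_right hdr
  have hqq : q - Q = 0 := by
    have : (q - Q) * d2_s1 a b = 0 := by
      simp only [d2_s1]; push_cast
      linear_combination -(a 2 : ℝ) * b1 + (a 1 : ℝ) * b2 + (a 2 : ℝ) * y1 - (a 1 : ℝ) * y2
    exact (mul_eq_zero.mp this).resolve_right hdr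
  rw [hpp, hqq] at y0
  have z0 : y 0 = 0 := by
    have : (y 0 : ℝ) = 0 := by rw [y0]; ring
    exact_mod_cast this
  have z1 : y 1 = 0 := by exact_mod_cast b1
  have z2 : y 2 = 0 := by exact_mod_cast b2
  refine ⟨P, Q, ?_⟩
  rw [← sub_eq_zero]
  ext i
  fin_cases i
  · exact z0
  · exact z1
  · exact z2

/-- change of basis in a plane: the coefficient is a unit -/
theorem unimod (α₁ α₂ : ℝ) (a b c : Fin 3 → ℤ) (hab : Nxt α₁ α₂ a b) (hbc : Nxt α₁ α₂ b c)
    (h1 : d2_s1 a b ≠ 0) (h2 : d2_s1 b c ≠ 0) (h3 : d3 a b c = 0) :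
    ∃ p q : ℤ, |p| = 1 ∧ c = p • a + q • b := by
  obtain ⟨p, q, hc⟩ := prim α₁ α₂ a b c hab h1 h3
  have h3' : d3 b c a = 0 := by rw [← h3]; simp only [d3, d2_s1]; ring
  obtain ⟨p', q', ha⟩ := prim α₁ α₂ b c a hbc h2 h3'
  refine ⟨p, q, ?_, hc⟩
  have e1 : d2_s1 b c = -p * d2_s1 a b := by rw [hc]; simp [d2_s1]; ring
  have e2 : d2_s1 a b = -q' * d2_s1 b c := by
    have : d2_s1 (p' • b + q' • c) b = -q' * d2_s1 b c := by simp [d2_s1]; ring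
    rw [← ha] at this; exact this
  have : d2_s1 a b * (q' * p - 1) = 0 := by
    rw [e1] at e2; linear_combination -e2
  have h4 : q' * p = 1 := by
    have := (mul_eq_zero.mp this).resolve_left h1; linarith
  exact Int.isUnit_iff_abs_eq.mp (IsUnit.of_mul_eq_one_right _ h4)

theorem invar (α₁ α₂ : ℝ) (a b c : Fin 3 → ℤ) (hab : Nxt α₁ α₂ a b) (hbc : Nxt α₁ α₂ b c)
    (h1 : d2_s1 a b ≠ 0) (h2 : d2_s1 b c ≠ 0) (h3 : d3 a b c = 0) :
    |(d2_s1 b c : ℝ)| = |(d2_s1 a b : ℝ)| ∧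
    |LL α₁ α₂ b * c 1 - LL α₁ α₂ c * b 1| = |LL α₁ α₂ a * b 1 - LL α₁ α₂ b * a 1| ∧
    |LL α₁ α₂ b * c 2 - LL α₁ α₂ c * b 2| = |LL α₁ α₂ a * b 2 - LL α₁ α₂ b * a 2| := by
  obtain ⟨p, q, hp, hc⟩ := unimod α₁ α₂ a b c hab hbc h1 h2 h3
  have hp' : |(p:ℝ)| = 1 := by exact_mod_cast hp
  have hL : LL α₁ α₂ c = p * LL α₁ α₂ a + q * LL α₁ α₂ b := by rw [hc, LL_comb]
  have c1 : (c 1 : ℝ) = p * a 1 + q * b 1 := by rw [hc]; simp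
  have c2 : (c 2 : ℝ) = p * a 2 + q * b 2 := by rw [hc]; simp
  refine ⟨?_, ?_, ?_⟩
  · have : (d2_s1 b c : ℝ) = -p * d2_s1 a b := by simp only [d2_s1]; push_cast; rw [c1, c2]; ring
    rw [this, abs_mul, abs_neg, hp', one_mul]
  · have : LL α₁ α₂ b * c 1 - LL α₁ α₂ c * b 1 = -p * (LL α₁ α₂ a * b 1 - LL α₁ α₂ b * a 1) := by
      rw [hL, c1]; ring
    rw [this, abs_mul, abs_neg, hp', one_mul]
  · have : LL α₁ α₂ b * c 2 - LL α₁ α₂ c * b 2 = -p * (LL α₁ α₂ a * b 2 - LL α₁ α₂ b * a 2) := by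
      rw [hL, c2]; ring
    rw [this, abs_mul, abs_neg, hp', one_mul]

/-- lower bound for the plane invariant, using the sign conditions -/
theorem h_ge (α₁ α₂ : ℝ) (a b : Fin 3 → ℤ) (ha : Best α₁ α₂ a) (h : Nxt α₁ α₂ a b)
    (hLb : LL α₁ α₂ b ≠ 0)
    (ha1 : 0 ≤ a 1) (ha2 : a 2 ≤ 0) (hb1 : 0 ≤ b 1) (hb2 : b 2 ≤ 0) :
    |LL α₁ α₂ a| * NN b ≤ |LL α₁ α₂ a * b 1 - LL α₁ α₂ b * a 1| ∨
    |LL α₁ α₂ a| * NN b ≤ |LL α₁ α₂ a * b 2 - LL α₁ α₂ b * a 2| := by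
  have hz := nxt_pos α₁ α₂ a b h
  have hNb : 0 < NN b := ha.1.trans h.1
  have ha1' : (0:ℝ) ≤ a 1 := by exact_mod_cast ha1
  have ha2' : (a 2 : ℝ) ≤ 0 := by exact_mod_cast ha2
  have hb1' : (0:ℝ) ≤ b 1 := by exact_mod_cast hb1
  have hb2' : (b 2 : ℝ) ≤ 0 := by exact_mod_cast hb2
  have A1 := abs1_le a
  have A2 := abs2_le a
  have B1 := abs1_le b
  have B2 := abs2_le b
  rw [abs_of_nonneg ha1'] at A1
  rw [abs_of_nonneg hb1'] at B1
  rw [abs_of_nonpos ha2'] at A2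
  rw [abs_of_nonpos hb2'] at B2
  have hNab := h.1
  have hmax : NN b = b 1 ∨ NN b = - b 2 := by
    rcases max_choice |(b 1 : ℝ)| |(b 2 : ℝ)| with hm | hm
    · left; rw [← abs_of_nonneg hb1']; exact hm
    · right; rw [← abs_of_nonpos hb2']; exact hm
  by_cases hopp : LL α₁ α₂ a * LL α₁ α₂ b < 0
  · -- opposite signs: the terms add up
    have gen : ∀ s t : ℝ, 0 ≤ s * t → |t| = NN b → |LL α₁ α₂ a| * NN b ≤ |LL α₁ α₂ a * t - LL α₁ α₂ b * s| := by
      intro s t hst ht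
      rw [← ht, ← abs_mul]
      apply sq_le_sq.mp
      nlinarith [mul_nonneg hst (neg_nonneg.mpr hopp.le), sq_nonneg (LL α₁ α₂ b * s)]
    rcases hmax with hm | hm
    · left; exact gen _ _ (mul_nonneg ha1' hb1') (by rw [abs_of_nonneg hb1', hm])
    · right; exact gen _ _ (mul_nonneg_of_nonpos_of_nonpos ha2' hb2') (by rw [abs_of_nonpos hb2', hm])
  · -- same sign
    have hsame : 0 < LL α₁ α₂ a * LL α₁ α₂ b :=
      lt_of_le_of_ne (not_lt.mp hopp) (Ne.symm (mul_ne_zero (abs_pos.mp hz) hLb))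
    have hdiff : |LL α₁ α₂ (b - a)| < |LL α₁ α₂ a| := by
      have e : LL α₁ α₂ (b - a) = LL α₁ α₂ b - LL α₁ α₂ a := by simp [LL]; ring
      rw [e]
      apply sq_lt_sq.mp
      have h1 : |LL α₁ α₂ b| * |LL α₁ α₂ b| < |LL α₁ α₂ a| * |LL α₁ α₂ b| :=
        mul_lt_mul_of_pos_right h.2.1 (abs_pos.mpr hLb)
      rw [abs_mul_abs_self, ← abs_mul, abs_of_pos hsame] at h1
      nlinarith
    have hN0 : 0 < NN (b - a) := by
      rw [NN_int]
      by_contra hcon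
      have hle : max |(b - a) 1| |(b - a) 2| ≤ 0 := by
        have := not_lt.mp hcon; exact_mod_cast this
      have l1 : b 1 = a 1 := by
        have := abs_nonpos_iff.mp ((le_max_left _ _).trans hle); simp at this; omega
      have l2 : b 2 = a 2 := by
        have := abs_nonpos_iff.mp ((le_max_right _ _).trans hle); simp at this; omega
      have : NN b = NN a := by simp [NN, l1, l2]
      linarith
    have hNge : NN b ≤ NN (b - a) := by
      by_contra hcon
      have := h.2.2 _ hN0 (not_le.mp hcon)
      linarith
    have hch : NN b ≤ |(b 1 : ℝ) - a 1| ∨ NN b ≤ |(b 2 : ℝ) - a 2| := by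
      have : NN (b - a) = max |(b 1 : ℝ) - a 1| |(b 2 : ℝ) - a 2| := by simp [NN]
      rw [this] at hNge; exact le_max_iff.mp hNge
    rcases hch with hc | hc
    · left
      have hb : (b 1 : ℝ) = NN b := by
        rcases le_abs.mp hc with h' | h' <;> linarith
      have ha0 : (a 1 : ℝ) = 0 := by
        rcases le_abs.mp hc with h' | h' <;> linarith
      rw [ha0, mul_zero, sub_zero, abs_mul, abs_of_nonneg hb1', hb]
    · right
      have hb : -(b 2 : ℝ) = NN b := by
        rcases le_abs.mp hc with h' | h' <;> linarith
      have ha0 : (a 2 : ℝ) = 0 := by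
        rcases le_abs.mp hc with h' | h' <;> linarith
      rw [ha0, mul_zero, sub_zero, abs_mul, abs_of_nonpos hb2', hb]

/-- no good positive points with large size bound -/
def FailP (α₁ α₂ g K B0 : ℝ) : Prop :=
  ∀ B : ℝ, B0 ≤ B → ∀ x : Fin 3 → ℤ, 0 < x 1 → 0 < x 2 → (x 1 : ℝ) ≤ B → (x 2 : ℝ) ≤ B →
    K < |LL α₁ α₂ x| * B ^ g

theorem pf (α₁ α₂ g K B0 : ℝ) (hF : FailP α₁ α₂ g K B0) (hB0 : 4 ≤ B0)
    (u v : Fin 3 → ℤ) (hu1 : 0 ≤ u 1) (hu2 : u 2 ≤ 0)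
    (hd : d2_s1 u v ≠ 0) (hM : B0 ≤ NN u) (B E : ℝ) (hB : NN u + |(d2_s1 u v : ℝ)| / NN u ≤ B)
    (hE : (NN u + |(d2_s1 u v : ℝ)| / NN u) / |(d2_s1 u v : ℝ)| *
        (2 * NN v * |LL α₁ α₂ u| + NN u * |LL α₁ α₂ v|) ≤ E) : K < E * B ^ g := by
  have hN : 0 < NN u := by linarith
  obtain ⟨x, h1, h2, h3, h4, h5⟩ := pos_vec α₁ α₂ u v hu1 hu2 hd hN
  have hq : 0 ≤ |(d2_s1 u v : ℝ)| / NN u := by positivity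
  have := hF B (by linarith) x h1 h2 (h3.trans hB) (h4.trans hB)
  refine this.trans_le ?_
  apply mul_le_mul_of_nonneg_right (h5.trans hE)
  apply Real.rpow_nonneg; linarith

theorem rpow_le_sq (B g : ℝ) (hB : 1 ≤ B) (hg : g ≤ 2) : B ^ g ≤ B ^ 2 := by
  have := Real.rpow_le_rpow_of_exponent_le hB hg
  simpa using this

theorem pf2 (α₁ α₂ g K B0 : ℝ) (hF : FailP α₁ α₂ g K B0) (hB0 : 4 ≤ B0) (hg : g ≤ 2)
    (u v : Fin 3 → ℤ) (hu1 : 0 ≤ u 1) (hu2 : u 2 ≤ 0)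
    (hd : d2_s1 u v ≠ 0) (hM : B0 ≤ NN u) (B E : ℝ) (hB : NN u + |(d2_s1 u v : ℝ)| / NN u ≤ B)
    (hE : (NN u + |(d2_s1 u v : ℝ)| / NN u) / |(d2_s1 u v : ℝ)| *
        (2 * NN v * |LL α₁ α₂ u| + NN u * |LL α₁ α₂ v|) ≤ E) : K < E * B ^ 2 := by
  have h1 := pf α₁ α₂ g K B0 hF hB0 u v hu1 hu2 hd hM B E hB hE
  have hN : 0 < NN u := by linarith
  have hq : 0 ≤ |(d2_s1 u v : ℝ)| / NN u := by positivity
  have h2 := rpow_le_sq B g (by linarith) hg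
  have hv := NN_nonneg v
  have hE0 : 0 ≤ E := le_trans (by positivity) hE
  exact h1.trans_le (mul_le_mul_of_nonneg_left h2 hE0)

/-- admissible best approximations -/
def Good (α₁ α₂ B0 : ℝ) (v : Fin 3 → ℤ) : Prop :=
  Best α₁ α₂ v ∧ B0 ≤ NN v ∧ 0 ≤ v 1 ∧ v 2 ≤ 0

set_option maxHeartbeats 1000000 in
theorem triple1 (α₁ α₂ g K B0 : ℝ) (hF : FailP α₁ α₂ g K B0) (hB0 : 4 ≤ B0) (hg : g ≤ 2)
    (hK : 2 ^ 18 ≤ K) (a b c : Fin 3 → ℤ) (ha : Good α₁ α₂ B0 a) (hb : Good α₁ α₂ B0 b)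
    (hc : Good α₁ α₂ B0 c) (hab : Nxt α₁ α₂ a b) (hbc : Nxt α₁ α₂ b c) (h3 : d3 a b c ≠ 0) :
    1 / 3 ≤ |LL α₁ α₂ a| * |(d2_s1 b c : ℝ)| := by
  by_contra hcon
  push Not at hcon
  obtain ⟨ha0, haB, ha1, ha2⟩ := ha
  obtain ⟨hb0, hbB, hb1, hb2⟩ := hb
  obtain ⟨hc0, hcB, hc1, hc2⟩ := hc
  have m1 := nxt_mink α₁ α₂ a b ha0 hab
  have m2 := nxt_mink α₁ α₂ b c hb0 hbc
  have n1 := hab.1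
  have n2 := hbc.1
  have l1 := hab.2.1
  have l2 := hbc.2.1
  have hdet : (1:ℝ) ≤ |(d3 a b c : ℝ)| := by exact_mod_cast Int.one_le_abs h3
  rw [d3_eq α₁ α₂] at hdet
  have hdet2 : (1:ℝ) ≤ |LL α₁ α₂ a| * |(d2_s1 b c : ℝ)| + |LL α₁ α₂ b| * |(d2_s1 a c : ℝ)| + |LL α₁ α₂ c| * |(d2_s1 a b : ℝ)| := by
    have t1 := abs_add_le (LL α₁ α₂ a * d2_s1 b c - LL α₁ α₂ b * d2_s1 a c) (LL α₁ α₂ c * d2_s1 a b)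
    have t2 := abs_sub (LL α₁ α₂ a * d2_s1 b c) (LL α₁ α₂ b * d2_s1 a c)
    simp only [abs_mul] at t1 t2
    linarith
  have dac := d2_le a c ha1 ha2 hc1 hc2
  have dab := d2_le a b ha1 ha2 hb1 hb2
  have hA : 0 < NN a := by linarith
  have hB : 0 < NN b := by linarith
  have hC : 0 < NN c := by linarith
  have hzc := abs_nonneg (LL α₁ α₂ c)
  set za := |LL α₁ α₂ a|
  set zb := |LL α₁ α₂ b|
  set zc := |LL α₁ α₂ c|
  have hzb : 0 < zb := by linarith
  have hza : 0 < za := by linarith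
  rcases le_or_gt (1/3) (zb * |(d2_s1 a c : ℝ)|) with h | h
  · have hD : 0 < |(d2_s1 a c : ℝ)| := by
      by_contra hh
      have : |(d2_s1 a c : ℝ)| = 0 := le_antisymm (not_lt.mp hh) (abs_nonneg _)
      rw [this] at h; norm_num at h
    have hd : d2_s1 a c ≠ 0 := by intro hh; rw [hh] at hD; simp at hD
    set D := |(d2_s1 a c : ℝ)|
    have hX : NN a + D / NN a ≤ 2 * NN c := by
      have : D / NN a ≤ NN c := by rw [div_le_iff₀ hA]; linarith
      linarith
    have hXD : (NN a + D / NN a) / D ≤ 6 * NN c * zb := by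
      rw [div_le_iff₀ hD]; nlinarith
    have hE : (NN a + D / NN a) / D * (2 * NN c * za + NN a * zc) ≤ 18 * za := by
      have e1 : 2 * NN c * za + NN a * zc ≤ 3 * (NN c * za) := by nlinarith
      calc _ ≤ (6 * NN c * zb) * (3 * (NN c * za)) := by
            apply mul_le_mul hXD e1 (by positivity) (by positivity)
        _ = 18 * za * (zb * NN c ^ 2) := by ring
        _ ≤ 18 * za * 1 := by gcongr
        _ = 18 * za := by ring
    have hfin := pf2 α₁ α₂ g K B0 hF hB0 hg a c ha1 ha2 hd haB _ _ hX hE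
    have hca : NN c ≤ 3 * NN a := by
      have : 1 / 3 ≤ zb * (NN a * NN c) := h.trans (by gcongr)
      have e2 : zb * (NN a * NN c) * NN c ≤ NN a := by nlinarith
      nlinarith
    have : 18 * za * (2 * NN c) ^ 2 ≤ 648 * (za * NN b ^ 2) := by
      have : NN c ^ 2 ≤ 9 * NN b ^ 2 := by nlinarith
      nlinarith
    nlinarith
  · have h : 1/3 ≤ zc * |(d2_s1 a b : ℝ)| := by linarith
    have hD : 0 < |(d2_s1 a b : ℝ)| := by
      by_contra hh
      have : |(d2_s1 a b : ℝ)| = 0 := le_antisymm (not_lt.mp hh) (abs_nonneg _)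
      rw [this] at h; norm_num at h
    have hd : d2_s1 a b ≠ 0 := by intro hh; rw [hh] at hD; simp at hD
    set D := |(d2_s1 a b : ℝ)|
    have hX : NN a + D / NN a ≤ 2 * NN b := by
      have : D / NN a ≤ NN b := by rw [div_le_iff₀ hA]; linarith
      linarith
    have hXD : (NN a + D / NN a) / D ≤ 6 * NN b * zc := by
      rw [div_le_iff₀ hD]; nlinarith
    have hE : (NN a + D / NN a) / D * (2 * NN b * za + NN a * zb) ≤ 18 * zc := by
      have e1 : 2 * NN b * za + NN a * zb ≤ 3 * (NN b * za) := by
        have := mul_le_mul n1.le l1.le hzb.le hB.le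
        linarith
      calc _ ≤ (6 * NN b * zc) * (3 * (NN b * za)) := by
            apply mul_le_mul hXD e1 (by positivity) (by positivity)
        _ = 18 * zc * (za * NN b ^ 2) := by ring
        _ ≤ 18 * zc * 1 := by gcongr
        _ = 18 * zc := by ring
    have hfin := pf2 α₁ α₂ g K B0 hF hB0 hg a b ha1 ha2 hd haB _ _ hX hE
    have : zc * NN b ^ 2 ≤ zb * NN c ^ 2 := by
      apply mul_le_mul l2.le _ (by positivity) hzb.le
      nlinarith
    nlinarith

set_option maxHeartbeats 1000000 in
theorem triple2 (α₁ α₂ g K B0 : ℝ) (hF : FailP α₁ α₂ g K B0) (hB0 : 4 ≤ B0) (hg : g ≤ 2)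
    (hK : 2 ^ 18 ≤ K) (a b c : Fin 3 → ℤ) (ha : Good α₁ α₂ B0 a) (hb : Good α₁ α₂ B0 b)
    (hc : Good α₁ α₂ B0 c) (hab : Nxt α₁ α₂ a b) (hbc : Nxt α₁ α₂ b c) (h3 : d3 a b c ≠ 0) :
    100 * NN b ≤ NN c := by
  have h := triple1 α₁ α₂ g K B0 hF hB0 hg hK a b c ha hb hc hab hbc h3
  by_contra hcon
  push Not at hcon
  obtain ⟨ha0, haB, ha1, ha2⟩ := ha
  obtain ⟨hb0, hbB, hb1, hb2⟩ := hb
  obtain ⟨hc0, hcB, hc1, hc2⟩ := hc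
  have m1 := nxt_mink α₁ α₂ a b ha0 hab
  have m2 := nxt_mink α₁ α₂ b c hb0 hbc
  have n1 := hab.1
  have n2 := hbc.1
  have l1 := hab.2.1
  have l2 := hbc.2.1
  have dbc := d2_le b c hb1 hb2 hc1 hc2
  have hA : 0 < NN a := by linarith
  have hB : 0 < NN b := by linarith
  have hC : 0 < NN c := by linarith
  have hzc := abs_nonneg (LL α₁ α₂ c)
  set za := |LL α₁ α₂ a|
  set zb := |LL α₁ α₂ b|
  set zc := |LL α₁ α₂ c|
  have hzb : 0 < zb := by linarith
  have hza : 0 < za := by linarith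
  have hD : 0 < |(d2_s1 b c : ℝ)| := by
    by_contra hh
    have : |(d2_s1 b c : ℝ)| = 0 := le_antisymm (not_lt.mp hh) (abs_nonneg _)
    rw [this] at h; norm_num at h
  have hd : d2_s1 b c ≠ 0 := by intro hh; rw [hh] at hD; simp at hD
  set D := |(d2_s1 b c : ℝ)|
  have hX : NN b + D / NN b ≤ NN b + NN c := by
    have : D / NN b ≤ NN c := by rw [div_le_iff₀ hB]; linarith
    linarith
  have hXD : (NN b + D / NN b) / D ≤ 3 * (NN b + NN c) * za := by
    rw [div_le_iff₀ hD]; nlinarith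
  have hE : (NN b + D / NN b) / D * (2 * NN c * zb + NN b * zc) ≤ 9 * (NN b + NN c) * za * (NN c * zb) := by
    have e1 : 2 * NN c * zb + NN b * zc ≤ 3 * (NN c * zb) := by nlinarith
    calc _ ≤ (3 * (NN b + NN c) * za) * (3 * (NN c * zb)) := by
          apply mul_le_mul hXD e1 (by positivity) (by positivity)
      _ = 9 * (NN b + NN c) * za * (NN c * zb) := by ring
  have hfin := pf2 α₁ α₂ g K B0 hF hB0 hg b c hb1 hb2 hd hbB _ _ hX hE
  have s1 : (NN b + NN c) ^ 2 ≤ (101 * NN b) ^ 2 := by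
    apply pow_le_pow_left₀ (by positivity); linarith
  have s2 : NN b + NN c ≤ 2 * NN c := by linarith
  have : 9 * (NN b + NN c) * za * (NN c * zb) * (NN b + NN c) ^ 2 ≤ 9 * (2 * NN c) * za * (NN c * zb) * (101 * NN b) ^ 2 := by
    gcongr
  have e : 9 * (2 * NN c) * za * (NN c * zb) * (101 * NN b) ^ 2 = 183618 * (za * NN b ^ 2) * (zb * NN c ^ 2) := by ring
  have : 183618 * (za * NN b ^ 2) * (zb * NN c ^ 2) ≤ 183618 * 1 * 1 := by gcongr
  linarith

theorem mink_y (α₁ α₂ e T : ℝ) (b : Fin 3 → ℤ) (hb : 0 < NN b) (he : 0 < e) (hT : 0 < T) (h : 1 < e * T) :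
    ∃ y : Fin 3 → ℤ, y ≠ 0 ∧ |LL α₁ α₂ y| < e ∧ |(d2_s1 b y : ℝ)| < T ∧ NN y ≤ NN b + T / NN b ∧
      ((|(b 1 : ℝ)| = NN b ∧ |(y 1 : ℝ)| < NN b) ∨ (|(b 2 : ℝ)| = NN b ∧ |(y 2 : ℝ)| < NN b)) := by
  have hTN : 0 ≤ T / NN b := by positivity
  rcases max_choice |(b 1 : ℝ)| |(b 2 : ℝ)| with hm | hm
  · have hN : |(b 1 : ℝ)| = NN b := hm.symm
    have hdet : (!![1, α₁, α₂; 0, -(b 2 : ℝ), (b 1 : ℝ); 0, 1, 0] : Matrix (Fin 3) (Fin 3) ℝ).det = -b 1 := by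
      simp [Matrix.det_fin_three]
    obtain ⟨x, hx0, hx⟩ := mink3 !![1, α₁, α₂; 0, -(b 2 : ℝ), (b 1 : ℝ); 0, 1, 0] ![e, T, NN b]
      (by intro i; fin_cases i <;> simp [he, hT, hb])
      (by rw [hdet]; intro h0; have h0' : (b 1 : ℝ) = 0 := by linarith
          rw [h0'] at hN; simp at hN; linarith)
      (by rw [hdet, abs_neg, hN]; simp; nlinarith)
    have h0 := hx 0
    have h1 := hx 1
    have h2 := hx 2
    simp [Matrix.mulVec, dotProduct, Fin.sum_univ_three] at h0 h1 h2
    have h1' : |(d2_s1 b x : ℝ)| < T := by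
      have e : (d2_s1 b x : ℝ) = -(b 2 * x 1) + b 1 * x 2 := by simp [d2_s1]; ring
      rw [e]; exact h1
    refine ⟨x, hx0, h0, h1', ?_, Or.inl ⟨hN, h2⟩⟩
    apply max_le
    · linarith
    · have q : |(x 2 : ℝ)| * NN b ≤ T + NN b * NN b := by
        rw [← hN, ← abs_mul]
        have : (x 2 : ℝ) * b 1 = d2_s1 b x + b 2 * x 1 := by simp [d2_s1]; ring
        rw [this]
        refine (abs_add_le _ _).trans ?_
        rw [abs_mul, hN]
        have := mul_le_mul (abs2_le b) h2.le (abs_nonneg _) hb.le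
        linarith
      rw [← le_div_iff₀ hb] at q
      refine q.trans_eq ?_
      field_simp; ring
  · have hN : |(b 2 : ℝ)| = NN b := hm.symm
    have hdet : (!![1, α₁, α₂; 0, -(b 2 : ℝ), (b 1 : ℝ); 0, 0, 1] : Matrix (Fin 3) (Fin 3) ℝ).det = -b 2 := by
      simp [Matrix.det_fin_three]
    obtain ⟨x, hx0, hx⟩ := mink3 !![1, α₁, α₂; 0, -(b 2 : ℝ), (b 1 : ℝ); 0, 0, 1] ![e, T, NN b]
      (by intro i; fin_cases i <;> simp [he, hT, hb])
      (by rw [hdet]; intro h0; have h0' : (b 2 : ℝ) = 0 := by linarith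
          rw [h0'] at hN; simp at hN; linarith)
      (by rw [hdet, abs_neg, hN]; simp; nlinarith)
    have h0 := hx 0
    have h1 := hx 1
    have h2 := hx 2
    simp [Matrix.mulVec, dotProduct, Fin.sum_univ_three] at h0 h1 h2
    have h1' : |(d2_s1 b x : ℝ)| < T := by
      have e : (d2_s1 b x : ℝ) = -(b 2 * x 1) + b 1 * x 2 := by simp [d2_s1]; ring
      rw [e]; exact h1
    refine ⟨x, hx0, h0, h1', ?_, Or.inr ⟨hN, h2⟩⟩
    apply max_le
    · have q : |(x 1 : ℝ)| * NN b ≤ T + NN b * NN b := by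
        rw [← hN, ← abs_mul]
        have : (x 1 : ℝ) * b 2 = b 1 * x 2 - d2_s1 b x := by simp [d2_s1]; ring
        rw [this]
        refine (abs_sub _ _).trans ?_
        rw [abs_mul, hN]
        have := mul_le_mul (abs1_le b) h2.le (abs_nonneg _) hb.le
        linarith
      rw [← le_div_iff₀ hb] at q
      refine q.trans_eq ?_
      field_simp; ring
    · linarith

theorem NN_zero_of (y : Fin 3 → ℤ) (h1 : y 1 = 0) (h2 : y 2 = 0) : NN y = 0 := by
  simp [NN, h1, h2]

/-- if `y = p a + q b` is small in the dominating coordinate of `b` then its form is large -/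
theorem comb_large (za zb la lb A B s t : ℝ) (p q : ℤ) (hla : |la| = za) (hlb : |lb| = zb)
    (hz : zb ≤ 3 / 100 * za) (hza : 0 < za)
    (hs : |s| ≤ A) (ht : |t| = B) (hAB : A < B) (hA : 0 ≤ A)
    (hy : |p * s + q * t| < B) (hL : |p * la + q * lb| < za / 4) : p = 0 ∧ q = 0 := by
  have hqB : |(q:ℝ)| * B < B + |(p:ℝ)| * A := by
    have h1 := abs_sub ((p:ℝ) * s + q * t) (p * s)
    rw [show (p:ℝ) * s + q * t - p * s = q * t by ring] at h1
    rw [abs_mul, abs_mul, ht] at h1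
    have := mul_le_mul_of_nonneg_left hs (abs_nonneg (p:ℝ))
    linarith
  have hB : 0 < B := by linarith
  by_cases hp : p = 0
  · refine ⟨hp, ?_⟩
    rw [hp] at hqB
    simp at hqB
    have : |(q:ℝ)| < 1 := by
      by_contra hc
      have := mul_le_mul_of_nonneg_right (not_lt.mp hc) hB.le
      linarith
    have : |q| < 1 := by exact_mod_cast this
    exact Int.abs_lt_one_iff.mp this
  · exfalso
    have hp1 : (1:ℝ) ≤ |(p:ℝ)| := by exact_mod_cast Int.one_le_abs hp
    have hlt : |(q:ℝ)| < |(p:ℝ)| + 1 := by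
      by_contra hc
      have h1 := mul_le_mul_of_nonneg_right (not_lt.mp hc) hB.le
      have h2 := mul_le_mul_of_nonneg_left hAB.le (abs_nonneg (p:ℝ))
      linarith
    have hqp : |(q:ℝ)| ≤ |(p:ℝ)| := by
      have : |q| < |p| + 1 := by exact_mod_cast hlt
      exact_mod_cast Int.lt_add_one_iff.mp this
    have h1 := abs_sub ((p:ℝ) * la + q * lb) (q * lb)
    rw [show (p:ℝ) * la + q * lb - q * lb = p * la by ring] at h1
    rw [abs_mul, abs_mul, hla, hlb] at h1
    have hzb : 0 ≤ zb := by rw [← hlb]; exact abs_nonneg _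
    have h2 := mul_le_mul hqp hz hzb (abs_nonneg _)
    have h3 := mul_le_mul_of_nonneg_right hp1 hza.le
    nlinarith

theorem y_d3 (α₁ α₂ : ℝ) (a b y : Fin 3 → ℤ) (hab : Nxt α₁ α₂ a b) (hd : d2_s1 a b ≠ 0)
    (hz : |LL α₁ α₂ b| ≤ 3 / 100 * |LL α₁ α₂ a|) (hy0 : y ≠ 0)
    (hL : |LL α₁ α₂ y| < |LL α₁ α₂ a| / 4)
    (hy : (|(b 1 : ℝ)| = NN b ∧ |(y 1 : ℝ)| < NN b) ∨ (|(b 2 : ℝ)| = NN b ∧ |(y 2 : ℝ)| < NN b)) :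
    d3 a b y ≠ 0 := by
  intro h3
  obtain ⟨p, q, hpq⟩ := prim α₁ α₂ a b y hab hd h3
  have hza := nxt_pos α₁ α₂ a b hab
  have y1 : (y 1 : ℝ) = p * a 1 + q * b 1 := by rw [hpq]; simp
  have y2 : (y 2 : ℝ) = p * a 2 + q * b 2 := by rw [hpq]; simp
  have yL : LL α₁ α₂ y = p * LL α₁ α₂ a + q * LL α₁ α₂ b := by rw [hpq, LL_comb]
  rw [yL] at hL
  have : p = 0 ∧ q = 0 := by
    rcases hy with ⟨hb, hyy⟩ | ⟨hb, hyy⟩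
    · rw [y1] at hyy
      exact comb_large _ _ _ _ _ _ _ _ p q rfl rfl hz hza (abs1_le a) hb hab.1 (NN_nonneg a) hyy hL
    · rw [y2] at hyy
      exact comb_large _ _ _ _ _ _ _ _ p q rfl rfl hz hza (abs2_le a) hb hab.1 (NN_nonneg a) hyy hL
  apply hy0
  rw [hpq, this.1, this.2]; simp

set_option maxHeartbeats 1000000 in
theorem ineq_i (α₁ α₂ g K B0 : ℝ) (hF : FailP α₁ α₂ g K B0) (hB0 : 4 ≤ B0) (hg : g ≤ 2)
    (hK : 2 ^ 18 ≤ K) (a b c : Fin 3 → ℤ) (ha : Good α₁ α₂ B0 a) (hb : Good α₁ α₂ B0 b)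
    (hc : Good α₁ α₂ B0 c) (hab : Nxt α₁ α₂ a b) (hbc : Nxt α₁ α₂ b c) (h3 : d3 a b c ≠ 0) :
    |LL α₁ α₂ b| ≤ 3 / 100 * |LL α₁ α₂ a| ∧
    K * (|LL α₁ α₂ a| * NN b) ^ g < 2 ^ 14 * |LL α₁ α₂ a| := by
  have t1 := triple1 α₁ α₂ g K B0 hF hB0 hg hK a b c ha hb hc hab hbc h3
  have t2 := triple2 α₁ α₂ g K B0 hF hB0 hg hK a b c ha hb hc hab hbc h3
  obtain ⟨ha0, haB, ha1, ha2⟩ := ha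
  obtain ⟨hb0, hbB, hb1, hb2⟩ := hb
  obtain ⟨hc0, hcB, hc1, hc2⟩ := hc
  have m1 := nxt_mink α₁ α₂ a b ha0 hab
  have m2 := nxt_mink α₁ α₂ b c hb0 hbc
  have n1 := hab.1
  have dbc := d2_le b c hb1 hb2 hc1 hc2
  have dab := d2_le a b ha1 ha2 hb1 hb2
  have hA : 0 < NN a := by linarith
  have hB : 0 < NN b := by linarith
  have hC : 0 < NN c := by linarith
  have hza := nxt_pos α₁ α₂ a b hab
  have hzb := nxt_pos α₁ α₂ b c hbc
  have hdab := nxt_d2 α₁ α₂ a b ha0 hab (by linarith)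
  have u1 : 1 ≤ 3 * (|LL α₁ α₂ a| * (NN b * NN c)) := by
    have := mul_le_mul_of_nonneg_left dbc hza.le
    linarith
  have u2 : |LL α₁ α₂ b| * NN c ≤ 3 * (|LL α₁ α₂ a| * NN b) := by
    have : (|LL α₁ α₂ b| * NN c) * NN c ≤ (3 * (|LL α₁ α₂ a| * NN b)) * NN c := by linarith
    exact le_of_mul_le_mul_right this hC
  have v1 : |LL α₁ α₂ b| ≤ 3 / 100 * |LL α₁ α₂ a| := by
    have h1 := mul_le_mul_of_nonneg_left t2 hzb.le
    have : |LL α₁ α₂ b| * (100 * NN b) ≤ (3 * |LL α₁ α₂ a|) * NN b := by linarith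
    have : (100 * |LL α₁ α₂ b|) * NN b ≤ (3 * |LL α₁ α₂ a|) * NN b := by linarith
    have := le_of_mul_le_mul_right this hB
    linarith
  refine ⟨v1, ?_⟩
  have v2 : |LL α₁ α₂ b| ≤ 9 * (|LL α₁ α₂ a| * NN b) ^ 2 := by
    have h1 := mul_le_mul_of_nonneg_left u1 hzb.le
    have h2 := mul_le_mul_of_nonneg_left u2 (by positivity : 0 ≤ 3 * (|LL α₁ α₂ a| * NN b))
    nlinarith
  obtain ⟨y, y0, yL, yD, yN, yc⟩ := mink_y α₁ α₂ (|LL α₁ α₂ a| / 4) (5 / |LL α₁ α₂ a|) b hB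
    (by positivity) (by positivity) (by
      have : |LL α₁ α₂ a| / 4 * (5 / |LL α₁ α₂ a|) = 5 / 4 := by field_simp
      rw [this]; norm_num)
  have hd3 := y_d3 α₁ α₂ a b y hab hdab v1 y0 yL yc
  have hdet : (1:ℝ) ≤ |(d3 a b y : ℝ)| := by exact_mod_cast Int.one_le_abs hd3
  rw [d3_eq α₁ α₂] at hdet
  have hdet2 : (1:ℝ) ≤ |LL α₁ α₂ a| * |(d2_s1 b y : ℝ)| + |LL α₁ α₂ b| * |(d2_s1 a y : ℝ)| + |LL α₁ α₂ y| * |(d2_s1 a b : ℝ)| := by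
    have t1 := abs_add_le (LL α₁ α₂ a * d2_s1 b y - LL α₁ α₂ b * d2_s1 a y) (LL α₁ α₂ y * d2_s1 a b)
    have t2 := abs_sub (LL α₁ α₂ a * d2_s1 b y) (LL α₁ α₂ b * d2_s1 a y)
    simp only [abs_mul] at t1 t2
    linarith
  have day := d2_le_gen a y
  have hyL := abs_nonneg (LL α₁ α₂ y)
  have hNy := NN_nonneg y
  have hyD0 := abs_nonneg (d2_s1 b y : ℝ)
  have hdy : d2_s1 b y = 0 → |(d2_s1 b y : ℝ)| = 0 := by intro h; rw [h]; simp
  have hpf := pf α₁ α₂ g K B0 hF hB0 b y hb1 hb2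
  set za := |LL α₁ α₂ a|
  set zb := |LL α₁ α₂ b|
  set D := |(d2_s1 b y : ℝ)|
  have hNb : NN b ≤ 1 / (za * NN b) := by
    rw [le_div_iff₀ (by positivity)]; linarith
  have hT : 5 / za / NN b = 5 * (1 / (za * NN b)) := by field_simp
  have hY : NN y ≤ 6 / (za * NN b) := by
    have : 6 / (za * NN b) = 6 * (1 / (za * NN b)) := by ring
    rw [this]; linarith
  have hY' : NN y * (za * NN b) ≤ 6 := by rwa [le_div_iff₀ (by positivity)] at hY
  have w1 : zb * |(d2_s1 a y : ℝ)| ≤ 36 / 100 := by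
    calc zb * |(d2_s1 a y : ℝ)| ≤ (3 / 100 * za) * (2 * (NN b * NN y)) := by
          apply mul_le_mul v1 (day.trans _) (abs_nonneg _) (by positivity)
          have := mul_le_mul_of_nonneg_right n1.le hNy
          linarith
      _ = 6 / 100 * (NN y * (za * NN b)) := by ring
      _ ≤ 36 / 100 := by linarith
  have w2 : |LL α₁ α₂ y| * |(d2_s1 a b : ℝ)| ≤ 1 / 4 := by
    calc |LL α₁ α₂ y| * |(d2_s1 a b : ℝ)| ≤ (za / 4) * (NN b * NN b) := by
          apply mul_le_mul yL.le (dab.trans _) (abs_nonneg _) (by positivity)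
          exact mul_le_mul_of_nonneg_right n1.le hB.le
      _ = (za * NN b ^ 2) / 4 := by ring
      _ ≤ 1 / 4 := by linarith
  have w3 : 3 / 8 ≤ za * D := by linarith
  have hD : 0 < D := by
    by_contra hh
    have : D = 0 := le_antisymm (not_lt.mp hh) hyD0
    rw [this] at w3; norm_num at w3
  have hdne : d2_s1 b y ≠ 0 := fun h => hD.ne' (hdy h)
  have hX : NN b + D / NN b ≤ 6 / (za * NN b) := by
    have h1 : D / NN b ≤ 5 / za / NN b := div_le_div_of_nonneg_right yD.le hB.le
    have : 6 / (za * NN b) = 6 * (1 / (za * NN b)) := by ring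
    rw [this]; linarith
  have hXD : (NN b + D / NN b) / D ≤ 11 / 3 / NN b := by
    rw [div_le_div_iff₀ hD hB]
    have : (NN b + D / NN b) * NN b = NN b ^ 2 + D := by field_simp
    rw [this]
    have : NN b ^ 2 * (3 / 8) ≤ NN b ^ 2 * (za * D) := mul_le_mul_of_nonneg_left w3 (by positivity)
    have : (za * NN b ^ 2) * D ≤ 1 * D := mul_le_mul_of_nonneg_right m1 hD.le
    linarith
  have hF1 : 2 * NN y * zb + NN b * |LL α₁ α₂ y| ≤ (108 + 1 / 4) * (za * NN b) := by
    have h1 : NN y * zb ≤ NN y * (9 * (za * NN b) ^ 2) := mul_le_mul_of_nonneg_left v2 hNy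
    have h2 : (NN y * (za * NN b)) * (za * NN b) ≤ 6 * (za * NN b) := mul_le_mul_of_nonneg_right hY' (by positivity)
    have h3 := mul_le_mul_of_nonneg_left yL.le hB.le
    nlinarith
  have hE : (NN b + D / NN b) / D * (2 * NN y * zb + NN b * |LL α₁ α₂ y|) ≤ 397 * za := by
    calc _ ≤ (11 / 3 / NN b) * ((108 + 1 / 4) * (za * NN b)) := by
          apply mul_le_mul hXD hF1 (by positivity) (by positivity)
      _ = 11 / 3 * (108 + 1 / 4) * za := by field_simp
      _ ≤ 397 * za := by linarith
  have hfin := hpf hdne hbB _ _ hX hE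
  rw [Real.div_rpow (by norm_num) (by positivity)] at hfin
  have hP : 0 < (za * NN b) ^ g := by positivity
  rw [← mul_div_assoc, lt_div_iff₀ hP] at hfin
  have h36 := rpow_le_sq 6 g (by norm_num) hg
  have := mul_le_mul_of_nonneg_left h36 (by positivity : 0 ≤ 397 * za)
  linarith

theorem ineq_ii (α₁ α₂ g K B0 : ℝ) (hF : FailP α₁ α₂ g K B0) (hB0 : 4 ≤ B0) (hg : g ≤ 2)
    (a b : Fin 3 → ℤ) (ha : Good α₁ α₂ B0 a) (hb : Good α₁ α₂ B0 b)
    (hab : Nxt α₁ α₂ a b) (hz : |LL α₁ α₂ b| ≤ 3 / 100 * |LL α₁ α₂ a|) :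
    K * |(d2_s1 a b : ℝ)| < 2 ^ 4 * (|LL α₁ α₂ a| * (NN b ^ 2 * NN b ^ g)) := by
  obtain ⟨ha0, haB, ha1, ha2⟩ := ha
  obtain ⟨hb0, hbB, hb1, hb2⟩ := hb
  have n1 := hab.1
  have hA : 0 < NN a := by linarith
  have hB : 0 < NN b := by linarith
  have hza := nxt_pos α₁ α₂ a b hab
  have hdab := nxt_d2 α₁ α₂ a b ha0 hab (by linarith)
  have hsym : d2_s1 b a = - d2_s1 a b := by simp [d2_s1]; ring
  have hdba : d2_s1 b a ≠ 0 := by rw [hsym]; exact neg_ne_zero.mpr hdab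
  have habs : |(d2_s1 b a : ℝ)| = |(d2_s1 a b : ℝ)| := by rw [hsym]; simp
  have hD : 0 < |(d2_s1 a b : ℝ)| := abs_pos.mpr (by exact_mod_cast hdab)
  have dab := d2_le a b ha1 ha2 hb1 hb2
  have hpf := pf α₁ α₂ g K B0 hF hB0 b a hb1 hb2 hdba hbB
  rw [habs] at hpf
  have hzb := abs_nonneg (LL α₁ α₂ b)
  set za := |LL α₁ α₂ a|
  set zb := |LL α₁ α₂ b|
  set D := |(d2_s1 a b : ℝ)|
  have hX : NN b + D / NN b ≤ 2 * NN b := by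
    have : D / NN b ≤ NN a := by rw [div_le_iff₀ hB]; exact dab
    linarith
  have hE : (NN b + D / NN b) / D * (2 * NN a * zb + NN b * za) ≤ 4 * NN b ^ 2 * za / D := by
    have h1 : 2 * NN a * zb + NN b * za ≤ 2 * (NN b * za) := by
      have := mul_le_mul n1.le hz hzb hB.le
      have : 0 < NN b * za := by positivity
      linarith
    calc _ ≤ (2 * NN b) / D * (2 * (NN b * za)) := by
          apply mul_le_mul _ h1 (by positivity) (by positivity)
          exact div_le_div_of_nonneg_right hX hD.le
      _ = _ := by ring
  have hfin := hpf _ _ hX hE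
  rw [Real.mul_rpow (by norm_num) hB.le, div_mul_eq_mul_div, lt_div_iff₀ hD] at hfin
  have h36 := rpow_le_sq 2 g (by norm_num) hg
  have hP : 0 < NN b ^ g := by positivity
  have := mul_le_mul_of_nonneg_left h36 (by positivity : 0 ≤ 4 * NN b ^ 2 * za * NN b ^ g)
  nlinarith

theorem ineq_iii (α₁ α₂ g K B0 H : ℝ) (hF : FailP α₁ α₂ g K B0) (hB0 : 4 ≤ B0) (hg : g ≤ 2)
    (hK : 2 ^ 18 ≤ K) (a b c : Fin 3 → ℤ) (ha : Good α₁ α₂ B0 a) (hb : Good α₁ α₂ B0 b)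
    (hc : Good α₁ α₂ B0 c) (hab : Nxt α₁ α₂ a b) (hbc : Nxt α₁ α₂ b c) (h3 : d3 a b c ≠ 0)
    (hH : |LL α₁ α₂ b| * NN c ≤ H) :
    K * (NN b * NN b ^ g) < 2 ^ 8 * (H * |(d2_s1 b c : ℝ)| ^ g) := by
  have t1 := triple1 α₁ α₂ g K B0 hF hB0 hg hK a b c ha hb hc hab hbc h3
  obtain ⟨ha0, haB, ha1, ha2⟩ := ha
  obtain ⟨hb0, hbB, hb1, hb2⟩ := hb
  obtain ⟨hc0, hcB, hc1, hc2⟩ := hc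
  have m1 := nxt_mink α₁ α₂ a b ha0 hab
  have n2 := hbc.1
  have l2 := hbc.2.1
  have hB : 0 < NN b := by linarith
  have hC : 0 < NN c := by linarith
  have hza := nxt_pos α₁ α₂ a b hab
  have hzb := nxt_pos α₁ α₂ b c hbc
  have hdbc := nxt_d2 α₁ α₂ b c hb0 hbc (by linarith)
  have hD : 0 < |(d2_s1 b c : ℝ)| := abs_pos.mpr (by exact_mod_cast hdbc)
  have hpf := pf α₁ α₂ g K B0 hF hB0 b c hb1 hb2 hdbc hbB
  have hzc := abs_nonneg (LL α₁ α₂ c)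
  set za := |LL α₁ α₂ a|
  set zb := |LL α₁ α₂ b|
  set zc := |LL α₁ α₂ c|
  set D := |(d2_s1 b c : ℝ)|
  have hH0 : 0 < H := lt_of_lt_of_le (by positivity) hH
  have hBD : NN b ^ 2 ≤ 3 * D := by
    have h1 := mul_le_mul_of_nonneg_left t1 (by positivity : 0 ≤ NN b ^ 2)
    have h2 := mul_le_mul_of_nonneg_right m1 hD.le
    linarith
  have hX : NN b + D / NN b ≤ 4 * D / NN b := by
    rw [le_div_iff₀ hB]
    have : (NN b + D / NN b) * NN b = NN b ^ 2 + D := by field_simp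
    linarith
  have hE : (NN b + D / NN b) / D * (2 * NN c * zb + NN b * zc) ≤ 12 * H / NN b := by
    have h1 : 2 * NN c * zb + NN b * zc ≤ 3 * H := by
      have := mul_le_mul n2.le l2.le hzc hC.le
      linarith
    have h2 : (NN b + D / NN b) / D ≤ 4 / NN b := by
      rw [div_le_iff₀ hD]
      refine hX.trans_eq ?_
      ring
    calc _ ≤ 4 / NN b * (3 * H) := by
          apply mul_le_mul h2 h1 (by positivity) (by positivity)
      _ = _ := by ring
  have hfin := hpf _ _ hX hE
  have hP : 0 < NN b ^ g := by positivity
  have hQ : 0 < D ^ g := by positivity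
  rw [Real.div_rpow (by positivity) hB.le, Real.mul_rpow (by norm_num) hD.le, div_mul_div_comm,
    lt_div_iff₀ (by positivity)] at hfin
  have h36 := rpow_le_sq 4 g (by norm_num) hg
  have h5 := mul_le_mul_of_nonneg_left h36 (by positivity : 0 ≤ 12 * H * D ^ g)
  have : 0 < H * D ^ g := by positivity
  nlinarith

theorem final_alg (s κ γ g l m M d z : ℝ) (hs : 0 < s) (hκ : 0 < κ) (hγ : 2 ≤ γ) (hg1 : 1 < g) (hg2 : g ≤ 2)
    (hl : 0 < l) (hM : 0 < M)
    (b1 : g - 1 ≤ κ * (g * γ + 1)) (b2 : γ * (g ^ 2 - g - 1) ≤ g)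
    (i1 : 18 * l + κ * s + g * (z + M) < 14 * l + z)
    (i2 : 18 * l + κ * s + d < 4 * l + z + (2 + g) * M)
    (i3 : 18 * l + κ * s + (1 + g) * m < 9 * l + z + M + g * d)
    (i4 : -s + d ≤ l + z + M + (1 + γ) * m) : False := by
  have e3 := mul_lt_mul_of_pos_left i3 (by linarith : 0 < γ + 1)
  have e4 := mul_le_mul_of_nonneg_left i4 (by linarith : 0 ≤ 1 + g)
  have hgg : 0 < g * γ - 1 := by nlinarith
  have e2 := mul_lt_mul_of_pos_left i2 hgg
  have hc : 0 < l * (9 * (γ + 1) - (1 + g) + 14 * (g * γ - 1)) := by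
    apply mul_pos hl; nlinarith
  have R' : 0 < (1 + g) * (s - γ * (κ * s) + γ * (1 + g) * M + (γ + 1) * z) := by
    nlinarith
  have R : 0 < s - γ * (κ * s) + γ * (1 + g) * M + (γ + 1) * z :=
    pos_of_mul_pos_right R' (by linarith)
  have R2 := mul_pos (by linarith : 0 < g - 1) R
  have e1 := mul_lt_mul_of_pos_left i1 (by linarith : 0 < γ + 1)
  have f1 := mul_le_mul_of_nonneg_left b1 hs.le
  have f2 := mul_le_mul_of_nonneg_left b2 hM.le
  have hl2 : 0 < (γ + 1) * l := by positivity
  nlinarith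

theorem core (α₁ α₂ g B0 Γ γ κ : ℝ) (hΓ0 : 0 < Γ) (hΓ1 : Γ < 1) (hκ : 0 < κ) (hγ : 2 ≤ γ)
    (hg1 : 1 < g) (hg : g ≤ 2)
    (b1 : g - 1 ≤ κ * (g * γ + 1)) (b2 : γ * (g ^ 2 - g - 1) ≤ g)
    (hF : FailP α₁ α₂ g (2 ^ 18 * Γ ^ (-κ)) B0) (hB0 : 4 ≤ B0)
    (hdio : ∀ v : Fin 3 → ℤ, 0 < NN v → Γ / NN v ^ γ ≤ |LL α₁ α₂ v|)
    (a0 a a' e f f' : Fin 3 → ℤ)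
    (ha0 : Good α₁ α₂ B0 a0) (ha : Good α₁ α₂ B0 a) (ha' : Good α₁ α₂ B0 a')
    (he : Good α₁ α₂ B0 e) (hf : Good α₁ α₂ B0 f) (hf' : Good α₁ α₂ B0 f')
    (n1 : Nxt α₁ α₂ a0 a) (n2 : Nxt α₁ α₂ a a') (n3 : Nxt α₁ α₂ e f) (n4 : Nxt α₁ α₂ f f')
    (h3 : d3 a0 a a' ≠ 0) (h3' : d3 e f f' ≠ 0)
    (hD : |(d2_s1 e f : ℝ)| = |(d2_s1 a a' : ℝ)|)
    (hI1 : |LL α₁ α₂ e * f 1 - LL α₁ α₂ f * e 1| = |LL α₁ α₂ a * a' 1 - LL α₁ α₂ a' * a 1|)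
    (hI2 : |LL α₁ α₂ e * f 2 - LL α₁ α₂ f * e 2| = |LL α₁ α₂ a * a' 2 - LL α₁ α₂ a' * a 2|) :
    False := by
  have hQ : 1 ≤ Γ ^ (-κ) := Real.one_le_rpow_of_pos_of_le_one_of_nonpos hΓ0 hΓ1.le (by linarith)
  have hK : (2:ℝ) ^ 18 ≤ 2 ^ 18 * Γ ^ (-κ) := by linarith
  have hLa' : LL α₁ α₂ a' ≠ 0 := by
    have h1 := hdio a' ha'.1.1
    have : 0 < Γ / NN a' ^ γ := by have := ha'.1.1; positivity
    exact abs_pos.mp (by linarith)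
  have hH : |LL α₁ α₂ a| * NN a' ≤ 2 * (|LL α₁ α₂ e| * NN f) := by
    rcases h_ge α₁ α₂ a a' ha.1 n2 hLa' ha.2.2.1 ha.2.2.2 ha'.2.2.1 ha'.2.2.2 with h | h
    · rw [← hI1] at h
      exact h.trans (h_le α₁ α₂ e f n3 _ _ (abs1_le e) (abs1_le f))
    · rw [← hI2] at h
      exact h.trans (h_le α₁ α₂ e f n3 _ _ (abs2_le e) (abs2_le f))
  obtain ⟨hz, j1⟩ := ineq_i α₁ α₂ g _ B0 hF hB0 hg hK e f f' he hf hf' n3 n4 h3'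
  have j2 := ineq_ii α₁ α₂ g _ B0 hF hB0 hg e f he hf n3 hz
  have j3 := ineq_iii α₁ α₂ g _ B0 _ hF hB0 hg hK a0 a a' ha0 ha ha' n1 n2 h3 hH
  rw [hD] at j2
  have hm : 0 < NN a := ha.1.1
  have hM : 1 < NN f := by linarith [hf.2.1]
  have hM0 : 0 < NN f := by linarith
  have hzeta : 0 < |LL α₁ α₂ e| := nxt_pos α₁ α₂ e f n3
  have hDpos : 0 < |(d2_s1 a a' : ℝ)| := abs_pos.mpr (by
    exact_mod_cast nxt_d2 α₁ α₂ a a' ha.1 n2 (by linarith [ha'.2.1]))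
  have j4 : Γ * |(d2_s1 a a' : ℝ)| ≤ 2 * (|LL α₁ α₂ e| * NN f) * (NN a * NN a ^ γ) := by
    have h1 := hdio a hm
    have hp : 0 < NN a ^ γ := by positivity
    rw [div_le_iff₀ hp] at h1
    have h2 := d2_le a a' ha.2.2.1 ha.2.2.2 ha'.2.2.1 ha'.2.2.2
    calc Γ * |(d2_s1 a a' : ℝ)| ≤ (|LL α₁ α₂ a| * NN a ^ γ) * (NN a * NN a') := by
          apply mul_le_mul h1 h2 hDpos.le (by positivity)
      _ = (|LL α₁ α₂ a| * NN a') * (NN a * NN a ^ γ) := by ring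
      _ ≤ _ := by gcongr
  have hP0 : 0 < Γ ^ (-κ) := by positivity
  generalize |LL α₁ α₂ e| = Z at *
  generalize |(d2_s1 a a' : ℝ)| = D at *
  generalize NN f = F at *
  generalize NN a = A at *
  have q1 := Real.log_lt_log (by positivity) j1
  have q2 := Real.log_lt_log (by positivity) j2
  have q3 := Real.log_lt_log (by positivity) j3
  have q4 := Real.log_le_log (by positivity) j4
  have k1 : Real.log (2 ^ 18 * Γ ^ (-κ) * (Z * F) ^ g) = 18 * Real.log 2 + κ * (-Real.log Γ) + g * (Real.log Z + Real.log F) := by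
    rw [Real.log_mul (by positivity) (by positivity), Real.log_mul (by positivity) (by positivity),
      Real.log_pow, Real.log_rpow hΓ0, Real.log_rpow (by positivity), Real.log_mul (by positivity) (by positivity)]
    push_cast; ring
  have k1' : Real.log (2 ^ 14 * Z) = 14 * Real.log 2 + Real.log Z := by
    rw [Real.log_mul (by positivity) (by positivity), Real.log_pow]; push_cast; ring
  have k2 : Real.log (2 ^ 18 * Γ ^ (-κ) * D) = 18 * Real.log 2 + κ * (-Real.log Γ) + Real.log D := by
    rw [Real.log_mul (by positivity) (by positivity), Real.log_mul (by positivity) (by positivity),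
      Real.log_pow, Real.log_rpow hΓ0]
    push_cast; ring
  have k2' : Real.log (2 ^ 4 * (Z * (F ^ 2 * F ^ g))) = 4 * Real.log 2 + Real.log Z + (2 + g) * Real.log F := by
    rw [Real.log_mul (by positivity) (by positivity), Real.log_mul (by positivity) (by positivity),
      Real.log_mul (by positivity) (by positivity), Real.log_pow, Real.log_pow, Real.log_rpow hM0]
    push_cast; ring
  have k3 : Real.log (2 ^ 18 * Γ ^ (-κ) * (A * A ^ g)) = 18 * Real.log 2 + κ * (-Real.log Γ) + (1 + g) * Real.log A := by
    rw [Real.log_mul (by positivity) (by positivity), Real.log_mul (by positivity) (by positivity),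
      Real.log_mul (by positivity) (by positivity), Real.log_pow, Real.log_rpow hΓ0, Real.log_rpow hm]
    push_cast; ring
  have k3' : Real.log (2 ^ 8 * (2 * (Z * F) * D ^ g)) = 9 * Real.log 2 + Real.log Z + Real.log F + g * Real.log D := by
    rw [Real.log_mul (by positivity) (by positivity), Real.log_mul (by positivity) (by positivity),
      Real.log_mul (by positivity) (by positivity), Real.log_mul (by positivity) (by positivity),
      Real.log_pow, Real.log_rpow hDpos]
    push_cast; ring
  have k4 : Real.log (Γ * D) = -(-Real.log Γ) + Real.log D := by
    rw [Real.log_mul (by positivity) (by positivity)]; ring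
  have k4' : Real.log (2 * (Z * F) * (A * A ^ γ)) = Real.log 2 + Real.log Z + Real.log F + (1 + γ) * Real.log A := by
    rw [Real.log_mul (by positivity) (by positivity), Real.log_mul (by positivity) (by positivity),
      Real.log_mul (by positivity) (by positivity), Real.log_mul (by positivity) (by positivity), Real.log_rpow hm]
    ring
  rw [k1, k1'] at q1
  rw [k2, k2'] at q2
  rw [k3, k3'] at q3
  rw [k4, k4'] at q4
  have hs : 0 < -Real.log Γ := neg_pos.mpr (Real.log_neg hΓ0 hΓ1)
  exact final_alg _ κ γ g _ _ _ _ _ hs hκ hγ hg1 hg (Real.log_pos (by norm_num)) (Real.log_pos hM) b1 b2 q1 q2 q3 q4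

theorem best_neg (α₁ α₂ : ℝ) (v : Fin 3 → ℤ) (h : Best α₁ α₂ v) : Best α₁ α₂ (-v) := by
  unfold Best at *
  rw [NN_neg, LL_neg, abs_neg]; exact h

theorem nxt_neg (α₁ α₂ : ℝ) (v w : Fin 3 → ℤ) (h : Nxt α₁ α₂ v w) : Nxt α₁ α₂ v (-w) := by
  unfold Nxt at *
  rw [NN_neg, LL_neg, abs_neg]; exact h

theorem good_or (α₁ α₂ g K B0 : ℝ) (hL : ∀ x, 0 < NN x → LL α₁ α₂ x ≠ 0)
    (hF : FailP α₁ α₂ g K B0) (hB0 : 4 ≤ B0) (hg : g ≤ 2) (hK : 2 ^ 18 ≤ K)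
    (v : Fin 3 → ℤ) (hv : Best α₁ α₂ v) (hN : B0 ≤ NN v) :
    Good α₁ α₂ B0 v ∨ Good α₁ α₂ B0 (-v) := by
  have hno : ∀ x : Fin 3 → ℤ, NN x = NN v → |LL α₁ α₂ x| = |LL α₁ α₂ v| → ¬ (0 < x 1 ∧ 0 < x 2) := by
    rintro x hx1 hx2 ⟨p1, p2⟩
    have h1 := hF (NN v) hN x p1 p2 (by rw [← hx1]; exact (le_abs_self _).trans (abs1_le x))
      (by rw [← hx1]; exact (le_abs_self _).trans (abs2_le x))
    rw [hx2] at h1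
    obtain ⟨w, hw, hvw⟩ := exists_nxt α₁ α₂ hL v hv
    have h2 := nxt_mink α₁ α₂ v w hv hvw
    have h3 := rpow_le_sq (NN v) g (by linarith) hg
    have h4 : NN v ^ 2 ≤ NN w ^ 2 := pow_le_pow_left₀ (NN_nonneg v) hvw.1.le 2
    have h5 := mul_le_mul_of_nonneg_left (h3.trans h4) (abs_nonneg (LL α₁ α₂ v))
    linarith
  have e1 := hno v rfl rfl
  have e2 := hno (-v) (NN_neg v) (by rw [LL_neg, abs_neg])
  simp only [Pi.neg_apply] at e2
  have : (0 ≤ v 1 ∧ v 2 ≤ 0) ∨ (0 ≤ - v 1 ∧ - v 2 ≤ 0) := by omega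
  rcases this with h | h
  · left; exact ⟨hv, hN, h.1, h.2⟩
  · right; exact ⟨best_neg _ _ _ hv, by rw [NN_neg]; exact hN, h.1, h.2⟩

theorem best_large (α₁ α₂ : ℝ) (hL : ∀ x, 0 < NN x → LL α₁ α₂ x ≠ 0) (n : ℕ) :
    ∃ v, Best α₁ α₂ v ∧ (n : ℝ) ≤ NN v := by
  induction n with
  | zero =>
    obtain ⟨v, h1, h2, h3⟩ := exists_min α₁ α₂ 1 le_rfl
    refine ⟨v, ⟨h1, fun x hx hxv => h3 x hx (hxv.trans h2)⟩, ?_⟩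
    simpa using h1.le
  | succ n ih =>
    obtain ⟨v, hv, hn⟩ := ih
    obtain ⟨w, hw, hvw⟩ := exists_nxt α₁ α₂ hL v hv
    have := NN_succ_le v w hvw.1
    exact ⟨w, hw, by push_cast; linarith⟩

theorem exists_seq (α₁ α₂ g K B0 : ℝ) (hL : ∀ x, 0 < NN x → LL α₁ α₂ x ≠ 0)
    (hF : FailP α₁ α₂ g K B0) (hB0 : 4 ≤ B0) (hg : g ≤ 2) (hK : 2 ^ 18 ≤ K) :
    ∃ m : ℕ → (Fin 3 → ℤ), (∀ n, Good α₁ α₂ B0 (m n)) ∧ ∀ n, Nxt α₁ α₂ (m n) (m (n + 1)) := by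
  have step : ∀ v : {v // Good α₁ α₂ B0 v}, ∃ w : {v // Good α₁ α₂ B0 v}, Nxt α₁ α₂ v.1 w.1 := by
    rintro ⟨v, hv⟩
    obtain ⟨w, hw, hvw⟩ := exists_nxt α₁ α₂ hL v hv.1
    rcases good_or α₁ α₂ g K B0 hL hF hB0 hg hK w hw (hv.2.1.trans hvw.1.le) with h | h
    · exact ⟨⟨w, h⟩, hvw⟩
    · exact ⟨⟨-w, h⟩, nxt_neg _ _ _ _ hvw⟩
  have start : ∃ v, Good α₁ α₂ B0 v := by
    obtain ⟨n, hn⟩ := exists_nat_ge B0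
    obtain ⟨v, hv, hvn⟩ := best_large α₁ α₂ hL n
    rcases good_or α₁ α₂ g K B0 hL hF hB0 hg hK v hv (hn.trans hvn) with h | h
    · exact ⟨_, h⟩
    · exact ⟨_, h⟩
  choose f hf using step
  obtain ⟨v0, hv0⟩ := start
  refine ⟨fun n => (f^[n] ⟨v0, hv0⟩).1, fun n => (f^[n] ⟨v0, hv0⟩).2, fun n => ?_⟩
  simp only [Function.iterate_succ_apply']
  exact hf _

theorem inv_seq (α₁ α₂ B0 : ℝ) (hB0 : 4 ≤ B0) (m : ℕ → (Fin 3 → ℤ))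
    (hm : ∀ n, Good α₁ α₂ B0 (m n)) (hn : ∀ n, Nxt α₁ α₂ (m n) (m (n + 1))) (n j : ℕ)
    (h : ∀ k, n ≤ k → k < n + j → d3 (m k) (m (k + 1)) (m (k + 2)) = 0) :
    |(d2_s1 (m (n + j)) (m (n + j + 1)) : ℝ)| = |(d2_s1 (m n) (m (n + 1)) : ℝ)| ∧
    |LL α₁ α₂ (m (n + j)) * (m (n + j + 1)) 1 - LL α₁ α₂ (m (n + j + 1)) * (m (n + j)) 1| =
      |LL α₁ α₂ (m n) * (m (n + 1)) 1 - LL α₁ α₂ (m (n + 1)) * (m n) 1| ∧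
    |LL α₁ α₂ (m (n + j)) * (m (n + j + 1)) 2 - LL α₁ α₂ (m (n + j + 1)) * (m (n + j)) 2| =
      |LL α₁ α₂ (m n) * (m (n + 1)) 2 - LL α₁ α₂ (m (n + 1)) * (m n) 2| := by
  induction j with
  | zero => exact ⟨rfl, rfl, rfl⟩
  | succ j ih =>
    obtain ⟨i1, i2, i3⟩ := ih (fun k h1 h2 => h k h1 (by omega))
    have hd : ∀ n, d2_s1 (m n) (m (n + 1)) ≠ 0 := fun n =>
      nxt_d2 α₁ α₂ _ _ (hm n).1 (hn n) (by linarith [(hm (n + 1)).2.1])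
    obtain ⟨k1, k2, k3⟩ := invar α₁ α₂ _ _ _ (hn (n + j)) (hn (n + j + 1)) (hd _) (hd _)
      (h (n + j) (by omega) (by omega))
    exact ⟨k1.trans i1, k2.trans i2, k3.trans i3⟩

theorem indep_inf (α₁ α₂ B0 : ℝ) (hB0 : 4 ≤ B0) (m : ℕ → (Fin 3 → ℤ))
    (hm : ∀ n, Good α₁ α₂ B0 (m n)) (hn : ∀ n, Nxt α₁ α₂ (m n) (m (n + 1))) (n : ℕ) :
    ∃ k, n ≤ k ∧ d3 (m k) (m (k + 1)) (m (k + 2)) ≠ 0 := by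
  by_contra hcon
  push Not at hcon
  have hbig : ∀ j : ℕ, (j:ℝ) ≤ NN (m j) := by
    intro j
    induction j with
    | zero => simpa using NN_nonneg (m 0)
    | succ j ih =>
      have := NN_succ_le _ _ (hn j).1
      push_cast; linarith
  have hsmall : ∀ k, ∀ i : ℝ, i ≤ 2 * (|LL α₁ α₂ (m k)| * NN (m (k + 1))) → i * k ≤ 2 := by
    intro k i hi
    have h1 := nxt_mink α₁ α₂ _ _ (hm k).1 (hn k)
    have h2 := hbig (k + 1)
    push_cast at h2
    have h3 := mul_le_mul_of_nonneg_right hi (NN_nonneg (m (k + 1)))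
    rcases le_or_gt i 0 with h | h
    · have : i * k ≤ 0 := mul_nonpos_of_nonpos_of_nonneg h (by positivity)
      linarith
    · have : i * k ≤ i * NN (m (k + 1)) := mul_le_mul_of_nonneg_left (by linarith) h.le
      nlinarith
  have hzero : ∀ i : ℝ, (∀ j : ℕ, i * ((n + j : ℕ) : ℝ) ≤ 2) → i ≤ 0 := by
    intro i hi
    by_contra hc
    push Not at hc
    obtain ⟨j, hj⟩ := exists_nat_gt (2 / i)
    have h1 := hi j
    rw [div_lt_iff₀ hc] at hj
    push_cast at h1
    have : 0 ≤ i * n := by positivity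
    nlinarith
  apply nxt_not_par α₁ α₂ _ _ (hm n).1 (hn n)
  · apply abs_nonpos_iff.mp
    apply hzero
    intro j
    rw [← (inv_seq α₁ α₂ B0 hB0 m hm hn n j (fun k h1 _ => hcon k h1)).2.1]
    exact hsmall _ _ (h_le α₁ α₂ _ _ (hn _) _ _ (abs1_le _) (abs1_le _))
  · apply abs_nonpos_iff.mp
    apply hzero
    intro j
    rw [← (inv_seq α₁ α₂ B0 hB0 m hm hn n j (fun k h1 _ => hcon k h1)).2.2]
    exact hsmall _ _ (h_le α₁ α₂ _ _ (hn _) _ _ (abs2_le _) (abs2_le _))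

theorem no_fail (α₁ α₂ g B0 Γ γ κ : ℝ) (hΓ0 : 0 < Γ) (hΓ1 : Γ < 1) (hκ : 0 < κ) (hγ : 2 ≤ γ)
    (hg1 : 1 < g) (hg : g ≤ 2)
    (b1 : g - 1 ≤ κ * (g * γ + 1)) (b2 : γ * (g ^ 2 - g - 1) ≤ g)
    (hF : FailP α₁ α₂ g (2 ^ 18 * Γ ^ (-κ)) B0) (hB0 : 4 ≤ B0)
    (hdio : ∀ v : Fin 3 → ℤ, 0 < NN v → Γ / NN v ^ γ ≤ |LL α₁ α₂ v|) : False := by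
  have hQ : 1 ≤ Γ ^ (-κ) := Real.one_le_rpow_of_pos_of_le_one_of_nonpos hΓ0 hΓ1.le (by linarith)
  have hK : (2:ℝ) ^ 18 ≤ 2 ^ 18 * Γ ^ (-κ) := by linarith
  have hL : ∀ x, 0 < NN x → LL α₁ α₂ x ≠ 0 := by
    intro x hx
    have h1 := hdio x hx
    have : 0 < Γ / NN x ^ γ := by positivity
    exact abs_pos.mp (by linarith)
  obtain ⟨m, hm, hn⟩ := exists_seq α₁ α₂ g _ B0 hL hF hB0 hg hK
  obtain ⟨l, -, hl⟩ := indep_inf α₁ α₂ B0 hB0 m hm hn 0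
  classical
  have hex := indep_inf α₁ α₂ B0 hB0 m hm hn (l + 1)
  obtain ⟨hk1, hk2⟩ := Nat.find_spec hex
  have hmin : ∀ k, l + 1 ≤ k → k < Nat.find hex → d3 (m k) (m (k + 1)) (m (k + 2)) = 0 := by
    intro k h1 h2
    by_contra h3
    exact Nat.find_min hex h2 ⟨h1, h3⟩
  generalize Nat.find hex = k at *
  obtain ⟨j, rfl⟩ := Nat.exists_eq_add_of_le hk1
  obtain ⟨i1, i2, i3⟩ := inv_seq α₁ α₂ B0 hB0 m hm hn (l + 1) j hmin
  exact core α₁ α₂ g B0 Γ γ κ hΓ0 hΓ1 hκ hγ hg1 hg b1 b2 hF hB0 hdio _ _ _ _ _ _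
    (hm l) (hm (l + 1)) (hm (l + 1 + 1)) (hm (l + 1 + j)) (hm (l + 1 + j + 1)) (hm (l + 1 + j + 2))
    (hn _) (hn _) (hn _) (hn _) hl hk2 i1 i2 i3

theorem tau_sq : tau ^ 2 = tau + 1 := by
  have h := Real.sq_sqrt (by norm_num : (0:ℝ) ≤ 5)
  unfold tau; nlinarith

theorem tau_bounds : 1.6 < tau ∧ tau < 1.62 := by
  have h1 : (2.2:ℝ) < Real.sqrt 5 := Real.lt_sqrt_of_sq_lt (by norm_num)
  have h2 : Real.sqrt 5 < 2.24 := by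
    rw [Real.sqrt_lt' (by norm_num)]; norm_num
  unfold tau; constructor <;> linarith

theorem g_facts (γ : ℝ) (hγ : 2 ≤ γ) :
    0 < 1 / (tau ^ 2 * γ - 2) ∧ 1 < gfun γ ∧ gfun γ ≤ 2 ∧
    gfun γ - 1 ≤ 1 / (tau ^ 2 * γ - 2) * (gfun γ * γ + 1) ∧
    γ * (gfun γ ^ 2 - gfun γ - 1) ≤ gfun γ := by
  obtain ⟨t1, t2⟩ := tau_bounds
  have hs := tau_sq
  have hden : 0 < tau ^ 2 * γ - 2 := by nlinarith
  have hκ : 0 < 1 / (tau ^ 2 * γ - 2) := by positivity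
  have hk1 : 1 / (tau ^ 2 * γ - 2) * (tau ^ 2 * γ - 2) = 1 := by field_simp
  have hg : gfun γ = tau + 2 * (tau - 1) * (1 / (tau ^ 2 * γ - 2)) := by
    unfold gfun; ring
  have hk2 : 2 * tau * (1 / (tau ^ 2 * γ - 2)) ≤ 1 := by
    rw [mul_one_div, div_le_one hden]; nlinarith
  generalize 1 / (tau ^ 2 * γ - 2) = κ at *
  generalize tau = t at *
  rw [hg]
  have e : κ * γ * (t + 1) = 1 + 2 * κ := by rw [← hs]; linarith
  have hkinv : 0 ≤ 1 - 2 * t * κ := by linarith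
  refine ⟨hκ, ?_, ?_, ?_, ?_⟩
  · nlinarith
  · nlinarith
  · have : (t + 2 * (t - 1) * κ - 1) * (t + 1) ≤ (κ * ((t + 2 * (t - 1) * κ) * γ + 1)) * (t + 1) := by
      have : (κ * ((t + 2 * (t - 1) * κ) * γ + 1)) * (t + 1) = (t + 2 * (t - 1) * κ) * (1 + 2 * κ) + κ * (t + 1) := by
        rw [← e]; ring
      rw [this]
      nlinarith
    exact le_of_mul_le_mul_right this (by linarith)
  · have hmul : 0 < κ * (t + 1) := by positivity
    have : (γ * ((t + 2 * (t - 1) * κ) ^ 2 - (t + 2 * (t - 1) * κ) - 1)) * (κ * (t + 1)) ≤ (t + 2 * (t - 1) * κ) * (κ * (t + 1)) := by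
      have e1 : (γ * ((t + 2 * (t - 1) * κ) ^ 2 - (t + 2 * (t - 1) * κ) - 1)) * (κ * (t + 1)) =
          κ * ((1 + 2 * κ) * (2 * (t - 1) * (2 * t - 1 + 2 * (t - 1) * κ))) := by
        rw [← e]; linear_combination (γ * κ * (t + 1)) * hs
      rw [e1]
      have e2 : (t + 2 * (t - 1) * κ) * (t + 1) - (1 + 2 * κ) * (2 * (t - 1) * (2 * t - 1 + 2 * (t - 1) * κ))
        = (1 - 2 * t * κ) * (t - 1) / 2 * (8 * (2 - t) * κ + (8 - 2 * t)) := by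
        linear_combination (-2 + (2 - 2 * t) * κ + 4 * (2 - 2 * t) * κ ^ 2) * hs
      have : 0 ≤ (1 - 2 * t * κ) * (t - 1) / 2 * (8 * (2 - t) * κ + (8 - 2 * t)) := by
        have h1 : 0 ≤ 8 * (2 - t) * κ + (8 - 2 * t) := by nlinarith
        have h2 : 0 ≤ t - 1 := by linarith
        positivity
      nlinarith
    exact le_of_mul_le_mul_right this hmul

theorem nint_le (α₁ α₂ : ℝ) (v : Fin 3 → ℤ) : nint (α₁ * v 1 + α₂ * v 2) ≤ |LL α₁ α₂ v| := by
  have h2 := round_le (α₁ * v 1 + α₂ * v 2) (-(v 0))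
  have e : |LL α₁ α₂ v| = |α₁ * v 1 + α₂ * v 2 - ((-(v 0) : ℤ) : ℝ)| := by
    congr 1; simp [LL]; ring
  rw [e]; exact h2

/-- Theorem 2: under the Diophantine condition ‖α₁m₁+α₂m₂‖ ≥ Γ/(max{|m₁|,|m₂|})^γ
there are infinitely many integer vectors (x₁,x₂) with positive coordinates and
‖α₁x₁ + α₂x₂‖ · (max{x₁,x₂})^{g(γ)} ≤ C(Γ). -/
theorem schmidt_positive_approx_diophantine (α₁ α₂ Γ γ : ℝ)
    (hΓ : Γ ∈ Set.Ioo (0 : ℝ) 1) (hγ : 2 ≤ γ)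
    (hdio : ∀ m : ℤ × ℤ, m ≠ 0 →
      Γ / ((max |m.1| |m.2| : ℤ) : ℝ) ^ γ ≤ nint (α₁ * m.1 + α₂ * m.2)) :
    {x : ℤ × ℤ | 0 < x.1 ∧ 0 < x.2 ∧
      nint (α₁ * x.1 + α₂ * x.2) * ((max x.1 x.2 : ℤ) : ℝ) ^ gfun γ ≤ Cconst Γ γ}.Infinite := by
  obtain ⟨hΓ0, hΓ1⟩ := hΓ
  obtain ⟨hκ, hg1, hg2, b1, b2⟩ := g_facts γ hγ
  have hC : Cconst Γ γ = 2 ^ 18 * Γ ^ (-(1 / (tau ^ 2 * γ - 2))) := by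
    unfold Cconst
    congr 2
    have : tau - tau ^ 2 = -1 := by rw [tau_sq]; ring
    rw [this]; ring
  rw [hC]
  intro hfin
  have hdio2 : ∀ v : Fin 3 → ℤ, 0 < NN v → Γ / NN v ^ γ ≤ |LL α₁ α₂ v| := by
    intro v hv
    have hne : ((v 1, v 2) : ℤ × ℤ) ≠ 0 := by
      intro h0
      rw [Prod.mk_eq_zero] at h0
      have := NN_zero_of v h0.1 h0.2
      linarith
    have h1 := hdio (v 1, v 2) hne
    rw [NN_int]
    exact h1.trans (nint_le α₁ α₂ v)
  set K := 2 ^ 18 * Γ ^ (-(1 / (tau ^ 2 * γ - 2))) with hK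
  have hK0 : 0 < K := by positivity
  set S := {x : ℤ × ℤ | 0 < x.1 ∧ 0 < x.2 ∧
      nint (α₁ * x.1 + α₂ * x.2) * ((max x.1 x.2 : ℤ) : ℝ) ^ gfun γ ≤ K} with hS
  have hδ : ∃ δ : ℝ, 0 < δ ∧ ∀ x ∈ S, δ ≤ nint (α₁ * x.1 + α₂ * x.2) := by
    have hpos : ∀ x ∈ S, 0 < nint (α₁ * x.1 + α₂ * x.2) := by
      intro x hx
      have hne : x ≠ 0 := by
        rintro rfl
        exact absurd hx.1 (by simp)
      refine lt_of_lt_of_le ?_ (hdio x hne)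
      have : 0 < max |x.1| |x.2| := lt_max_of_lt_left (abs_pos.mpr hx.1.ne')
      have : (0:ℝ) < ((max |x.1| |x.2| : ℤ) : ℝ) := by exact_mod_cast this
      positivity
    rcases S.eq_empty_or_nonempty with h | h
    · exact ⟨1, one_pos, by rw [h]; simp⟩
    · obtain ⟨x, hx, hmin⟩ := Set.exists_min_image S (fun x => nint (α₁ * x.1 + α₂ * x.2)) hfin h
      exact ⟨_, hpos x hx, hmin⟩
  obtain ⟨δ, hδ0, hδ⟩ := hδ
  refine no_fail α₁ α₂ (gfun γ) (max 4 (K / δ + 1)) Γ γ _ hΓ0 hΓ1 hκ hγ hg1 hg2 b1 b2 ?_ (le_max_left _ _) hdio2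
  intro B hB x hx1 hx2 hxB1 hxB2
  rw [← hK]
  by_contra hcon
  push Not at hcon
  have hB4 : 4 ≤ B := (le_max_left _ _).trans hB
  have hBK : K / δ + 1 ≤ B := (le_max_right _ _).trans hB
  have hBg : B ≤ B ^ gfun γ := by
    have := Real.rpow_le_rpow_of_exponent_le (by linarith : 1 ≤ B) hg1.le
    rwa [Real.rpow_one] at this
  have hn := nint_le α₁ α₂ x
  have hn0 : 0 ≤ nint (α₁ * x 1 + α₂ * x 2) := abs_nonneg _
  have hmem : ((x 1, x 2) : ℤ × ℤ) ∈ S := by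
    refine ⟨hx1, hx2, ?_⟩
    refine le_trans ?_ hcon
    have hm0 : (0:ℝ) ≤ ((max (x 1) (x 2) : ℤ) : ℝ) := by
      exact_mod_cast (le_max_of_le_left hx1.le)
    have hmB : ((max (x 1) (x 2) : ℤ) : ℝ) ≤ B := by
      push_cast; exact max_le hxB1 hxB2
    apply mul_le_mul hn (Real.rpow_le_rpow hm0 hmB (by linarith)) (by positivity) (abs_nonneg _)
  have h1 := hδ _ hmem
  simp only at h1
  have h2 : δ * B ≤ |LL α₁ α₂ x| * B ^ gfun γ :=
    mul_le_mul (h1.trans hn) hBg (by linarith) (abs_nonneg _)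
  have h3 : K + δ ≤ δ * B := by
    have := mul_le_mul_of_nonneg_left hBK hδ0.le
    have e : δ * (K / δ + 1) = K + δ := by field_simp
    linarith
  linarith
end
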